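/- arXiv:1807.06549 — 6 statements merged into one kernel-verified Lean document; each statement's English description precedes it below -/
import Mathlib

section
/- Let σ > 0 and μ ≥ 0 be constants with μσ ≥ 1. Then: (i) for every bounded d ∈ C²([0,∞);ℝ) and every classical solution u of the damped wave system with boundary input d, limsup_{t→+∞} ( (∫₀¹ u(t,x)² dx)^{1/2} ) ≤ (1/√3) · sup_{t≥0} |d(t)|; and (ii) if γ ≥ 0 is any constant such that limsup_{t→+∞} ( (∫₀¹ u(t,x)² dx)^{1/2} ) ≤ γ · sup_{t≥0} |d(t)| holds for every bounded d ∈ C²([0,∞);ℝ) and every classical solution u with boundary input d, then γ ≥ 1/√3. In other words, the asymptotic gain of the displacement in the spatial L² norm equals 1/√3. -/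
/-!
The bound rests on a maximum principle. Put `a = 1/σ` and `κ = μ - a`, which is nonnegative
exactly because `μσ ≥ 1`. With the auxiliary field `h = u_t - σ u_xx + κ u` the wave equation
becomes the first-order system
`u_t = σ u_xx - κ u + h`, `h_t = a (κ u - h)`,
which is cooperative: each coupling coefficient is nonnegative. For `D = sup |d|`, the pair
`((1 - x) D, κ (1 - x) D)` is a steady supersolution, and adding a multiple of
`(2 - x²) e^{-δt}` absorbs the initial data. A first-touching-time argument then gives
`u(t,x) ≤ (1 - x) D + C e^{-δt}` (`upper_barrier`). The same bound for `-u` yields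
`|u(t,x)| ≤ (1 - x) D + o(1)` uniformly in `x`, and `∫₀¹ (1 - x)² dx = 1/3` gives the gain
`1/√3` (`gain_upper`). The steady state `1 - x` with `d ≡ 1` shows sharpness (`gain_lower`).

The equation for `h` uses that `u_xx` is differentiable in time with derivative `u_txx`, which
is not part of the regularity assumed of a classical solution. The equation itself shows that
`u_txx` is continuous, so `u_xx(t,x) - u_xx(0,x) = ∫₀ᵗ u_txx(s,x) ds` follows by differentiating
under the integral sign (`u_xx_eq_integral`). This is needed at interior points `x` only,
because `u` stays strictly below the barrier at `x = 0` and `x = 1`.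
-/

open Real Filter MeasureTheory intervalIntegral Set

noncomputable section

/-- Time derivative ∂u/∂t. -/
def u_t (u : ℝ → ℝ → ℝ) (t x : ℝ) : ℝ := deriv (fun τ => u τ x) t

/-- Second time derivative ∂²u/∂t². -/
def u_tt (u : ℝ → ℝ → ℝ) (t x : ℝ) : ℝ := deriv (deriv (fun τ => u τ x)) t

/-- Second space derivative ∂²u/∂x². -/
def u_xx (u : ℝ → ℝ → ℝ) (t x : ℝ) : ℝ := deriv (deriv (fun y => u t y)) x

/-- Mixed derivative ∂³u/∂t∂x². -/
def u_txx (u : ℝ → ℝ → ℝ) (t x : ℝ) : ℝ := deriv (deriv (fun y => u_t u t y)) x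

/-- A classical solution of the wave equation with Kelvin-Voigt and viscous damping
with boundary input `d`: `u` is of class `C²`, `x ↦ ∂u/∂t(t,x)` is of class `C²` for
each `t ≥ 0`, the PDE holds for `t ≥ 0`, `x ∈ [0,1]`, and `u(t,0) = d(t)`, `u(t,1) = 0`. -/
def IsClassicalSolution (σ μ : ℝ) (d : ℝ → ℝ) (u : ℝ → ℝ → ℝ) : Prop :=
  ContDiff ℝ 2 (Function.uncurry u) ∧
  (∀ t : ℝ, 0 ≤ t → ContDiff ℝ 2 (fun x => u_t u t x)) ∧
  (∀ t x : ℝ, 0 ≤ t → x ∈ Set.Icc (0:ℝ) 1 →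
    u_tt u t x = u_xx u t x + σ * u_txx u t x - μ * u_t u t x) ∧
  (∀ t : ℝ, 0 ≤ t → u t 0 = d t ∧ u t 1 = 0)

/-- A bounded disturbance of class `C²`. -/
def BddC2 (d : ℝ → ℝ) : Prop :=
  ContDiff ℝ 2 d ∧ ∃ M : ℝ, ∀ t : ℝ, 0 ≤ t → |d t| ≤ M

/-- `sup_{t ≥ 0} |d(t)|`. -/
def supD (d : ℝ → ℝ) : ℝ := sSup {y : ℝ | ∃ t : ℝ, 0 ≤ t ∧ y = |d t|}

/-- `max_{x ∈ [0,1]} |u(t,x)|`, the spatial sup norm of the displacement. -/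
def supNorm (u : ℝ → ℝ → ℝ) (t : ℝ) : ℝ :=
  sSup {y : ℝ | ∃ x ∈ Set.Icc (0:ℝ) 1, y = |u t x|}

/-- `(∫₀¹ u(t,x)² dx)^{1/2}`, the spatial L² norm of the displacement. -/
def L2Norm (u : ℝ → ℝ → ℝ) (t : ℝ) : ℝ := Real.sqrt (∫ x in (0:ℝ)..1, (u t x) ^ 2)

/-! ### Partial derivatives of a `C²` displacement -/

/-- First space derivative `∂u/∂x`. -/
def uX (u : ℝ → ℝ → ℝ) (t x : ℝ) : ℝ := deriv (fun y => u t y) x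

/-- Mixed derivative `∂²u/∂t∂x`, taken as the time derivative of `∂u/∂x`. -/
def uXT (u : ℝ → ℝ → ℝ) (t x : ℝ) : ℝ := deriv (fun τ => uX u τ x) t

lemma hasDerivAt_fst_line {F : ℝ × ℝ → ℝ} (hF : Differentiable ℝ F) (t x : ℝ) :
    HasDerivAt (fun τ => F (τ, x)) (fderiv ℝ F (t, x) (1, 0)) t :=
  (hF (t, x)).hasFDerivAt.comp_hasDerivAt t ((hasDerivAt_id t).prodMk (hasDerivAt_const t x))

lemma hasDerivAt_snd_line {F : ℝ × ℝ → ℝ} (hF : Differentiable ℝ F) (t x : ℝ) :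
    HasDerivAt (fun y => F (t, y)) (fderiv ℝ F (t, x) (0, 1)) x :=
  (hF (t, x)).hasFDerivAt.comp_hasDerivAt x ((hasDerivAt_const x t).prodMk (hasDerivAt_id x))

lemma contDiff_fderiv_apply {F : ℝ × ℝ → ℝ} (hF : ContDiff ℝ 2 F) (v : ℝ × ℝ) :
    ContDiff ℝ 1 (fun p => fderiv ℝ F p v) :=
  (hF.fderiv_right (m := 1) (by norm_num)).clm_apply contDiff_const

section Regularity

variable {u : ℝ → ℝ → ℝ}

lemma u_t_eq (hu : ContDiff ℝ 2 (Function.uncurry u)) (t x : ℝ) :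
    u_t u t x = fderiv ℝ (Function.uncurry u) (t, x) (1, 0) :=
  (hasDerivAt_fst_line (hu.differentiable (by norm_num)) t x).deriv

lemma uX_eq (hu : ContDiff ℝ 2 (Function.uncurry u)) (t x : ℝ) :
    uX u t x = fderiv ℝ (Function.uncurry u) (t, x) (0, 1) :=
  (hasDerivAt_snd_line (hu.differentiable (by norm_num)) t x).deriv

lemma contDiff_u_t (hu : ContDiff ℝ 2 (Function.uncurry u)) :
    ContDiff ℝ 1 (Function.uncurry (u_t u)) := by
  have : Function.uncurry (u_t u) = fun p => fderiv ℝ (Function.uncurry u) p (1, 0) := by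
    ext ⟨t, x⟩; exact u_t_eq hu t x
  rw [this]; exact contDiff_fderiv_apply hu _

lemma contDiff_uX (hu : ContDiff ℝ 2 (Function.uncurry u)) :
    ContDiff ℝ 1 (Function.uncurry (uX u)) := by
  have : Function.uncurry (uX u) = fun p => fderiv ℝ (Function.uncurry u) p (0, 1) := by
    ext ⟨t, x⟩; exact uX_eq hu t x
  rw [this]; exact contDiff_fderiv_apply hu _

lemma hasDerivAt_time (hu : ContDiff ℝ 2 (Function.uncurry u)) (t x : ℝ) :
    HasDerivAt (fun τ => u τ x) (u_t u t x) t := by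
  rw [u_t_eq hu]
  exact hasDerivAt_fst_line (hu.differentiable (by norm_num)) t x

lemma hasDerivAt_space (hu : ContDiff ℝ 2 (Function.uncurry u)) (t x : ℝ) :
    HasDerivAt (fun y => u t y) (uX u t x) x := by
  rw [uX_eq hu]
  exact hasDerivAt_snd_line (hu.differentiable (by norm_num)) t x

lemma hasDerivAt_u_t (hu : ContDiff ℝ 2 (Function.uncurry u)) (t x : ℝ) :
    HasDerivAt (fun τ => u_t u τ x) (u_tt u t x) t := by
  have h := hasDerivAt_fst_line ((contDiff_u_t hu).differentiable (by norm_num)) t x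
  exact h.differentiableAt.hasDerivAt

lemma hasDerivAt_uX (hu : ContDiff ℝ 2 (Function.uncurry u)) (t x : ℝ) :
    HasDerivAt (fun y => uX u t y) (u_xx u t x) x := by
  have h := hasDerivAt_snd_line ((contDiff_uX hu).differentiable (by norm_num)) t x
  exact h.differentiableAt.hasDerivAt

lemma hasDerivAt_uX_time (hu : ContDiff ℝ 2 (Function.uncurry u)) (t x : ℝ) :
    HasDerivAt (fun τ => uX u τ x) (uXT u t x) t := by
  have h := hasDerivAt_fst_line ((contDiff_uX hu).differentiable (by norm_num)) t x
  exact h.differentiableAt.hasDerivAt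

lemma continuous_u_tt (hu : ContDiff ℝ 2 (Function.uncurry u)) :
    Continuous (Function.uncurry (u_tt u)) := by
  have : Function.uncurry (u_tt u) =
      fun p => fderiv ℝ (Function.uncurry (u_t u)) p (1, 0) := by
    ext ⟨t, x⟩
    exact (hasDerivAt_u_t hu t x).unique
      (hasDerivAt_fst_line ((contDiff_u_t hu).differentiable (by norm_num)) t x)
  rw [this]
  exact ((contDiff_u_t hu).continuous_fderiv (by norm_num)).clm_apply continuous_const

lemma continuous_u_xx (hu : ContDiff ℝ 2 (Function.uncurry u)) :
    Continuous (Function.uncurry (u_xx u)) := by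
  have : Function.uncurry (u_xx u) =
      fun p => fderiv ℝ (Function.uncurry (uX u)) p (0, 1) := by
    ext ⟨t, x⟩
    exact (hasDerivAt_uX hu t x).unique
      (hasDerivAt_snd_line ((contDiff_uX hu).differentiable (by norm_num)) t x)
  rw [this]
  exact ((contDiff_uX hu).continuous_fderiv (by norm_num)).clm_apply continuous_const

lemma continuous_uXT (hu : ContDiff ℝ 2 (Function.uncurry u)) :
    Continuous (Function.uncurry (uXT u)) := by
  have : Function.uncurry (uXT u) =
      fun p => fderiv ℝ (Function.uncurry (uX u)) p (1, 0) := by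
    ext ⟨t, x⟩
    exact (hasDerivAt_uX_time hu t x).unique
      (hasDerivAt_fst_line ((contDiff_uX hu).differentiable (by norm_num)) t x)
  rw [this]
  exact ((contDiff_uX hu).continuous_fderiv (by norm_num)).clm_apply continuous_const

/-- Symmetry of the second derivative: `∂/∂x ∂u/∂t = ∂/∂t ∂u/∂x`. -/
lemma hasDerivAt_u_t_space (hu : ContDiff ℝ 2 (Function.uncurry u)) (t x : ℝ) :
    HasDerivAt (fun y => u_t u t y) (uXT u t x) x := by
  have hd : Differentiable ℝ (fderiv ℝ (Function.uncurry u)) :=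
    (hu.fderiv_right (m := 1) (by norm_num)).differentiable (by norm_num)
  have key : ∀ v w : ℝ × ℝ, fderiv ℝ (fun p => fderiv ℝ (Function.uncurry u) p v) (t, x) w
      = fderiv ℝ (fderiv ℝ (Function.uncurry u)) (t, x) w v := by
    intro v w
    have := ((hd (t, x)).hasFDerivAt.clm_apply (hasFDerivAt_const v (t, x))).fderiv
    rw [this]; simp
  have h1 : HasDerivAt (fun y => u_t u t y)
      (fderiv ℝ (fderiv ℝ (Function.uncurry u)) (t, x) (0, 1) (1, 0)) x := by
    have := hasDerivAt_snd_line
      ((contDiff_fderiv_apply hu (1, 0)).differentiable (by norm_num)) t x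
    rw [key] at this
    simpa only [u_t_eq hu] using this
  have h2 : HasDerivAt (fun τ => uX u τ x)
      (fderiv ℝ (fderiv ℝ (Function.uncurry u)) (t, x) (1, 0) (0, 1)) t := by
    have := hasDerivAt_fst_line
      ((contDiff_fderiv_apply hu (0, 1)).differentiable (by norm_num)) t x
    rw [key] at this
    simpa only [uX_eq hu] using this
  have hs : IsSymmSndFDerivAt ℝ (Function.uncurry u) (t, x) :=
    hu.contDiffAt.isSymmSndFDerivAt (by simp)
  have h3 := (hasDerivAt_uX_time hu t x).unique h2
  rw [h3, hs.eq]
  exact h1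

end Regularity

/-! ### Time derivative of `u_xx` -/

/-- Value of `∂³u/∂t∂x²` read off from the equation; unlike `u_txx` it is visibly continuous. -/
def mixedRHS (σ μ : ℝ) (u : ℝ → ℝ → ℝ) (t x : ℝ) : ℝ :=
  (u_tt u t x - u_xx u t x + μ * u_t u t x) / σ

section Solution

variable {σ μ : ℝ} {d : ℝ → ℝ} {u : ℝ → ℝ → ℝ}

lemma continuous_mixedRHS (hu : ContDiff ℝ 2 (Function.uncurry u)) :
    Continuous (Function.uncurry (mixedRHS σ μ u)) := by
  have : Function.uncurry (mixedRHS σ μ u) = fun p => (Function.uncurry (u_tt u) p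
      - Function.uncurry (u_xx u) p + μ * Function.uncurry (u_t u) p) / σ := by
    ext ⟨t, x⟩; rfl
  rw [this]
  exact (((continuous_u_tt hu).sub (continuous_u_xx hu)).add
    (continuous_const.mul (contDiff_u_t hu).continuous)).div_const σ

lemma hasDerivAt_uXT (hσ : 0 < σ) (h : IsClassicalSolution σ μ d u) {t x : ℝ} (ht : 0 ≤ t)
    (hx : x ∈ Icc (0 : ℝ) 1) :
    HasDerivAt (fun y => uXT u t y) (mixedRHS σ μ u t x) x := by
  obtain ⟨hu, hut, hpde, -⟩ := h
  have e1 : deriv (fun y => u_t u t y) = fun y => uXT u t y := by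
    ext y; exact (hasDerivAt_u_t_space hu t y).deriv
  have e2 : mixedRHS σ μ u t x = u_txx u t x := by
    unfold mixedRHS
    rw [hpde t x ht hx]; field_simp; ring
  have hd : Differentiable ℝ (deriv (fun y => u_t u t y)) :=
    ((hut t ht).deriv' (n := 1)).differentiable (by norm_num)
  rw [e2, ← e1]
  exact (hd x).hasDerivAt

/-- Integrating `∂u/∂x` in time and differentiating under the integral sign in space gives
`u_xx(t,x) - u_xx(0,x)` as a time integral of the third-order mixed derivative. -/
lemma u_xx_eq_integral (hσ : 0 < σ) (h : IsClassicalSolution σ μ d u) {t x : ℝ} (ht : 0 ≤ t)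
    (hx : x ∈ Ioo (0 : ℝ) 1) :
    u_xx u t x = u_xx u 0 x + ∫ s in (0 : ℝ)..t, mixedRHS σ μ u s x := by
  have hu := h.1
  have cU := continuous_uXT hu
  have cG := continuous_mixedRHS (σ := σ) (μ := μ) hu
  have hint : ∀ y, uX u t y = uX u 0 y + ∫ s in (0 : ℝ)..t, uXT u s y := by
    intro y
    have cy : Continuous (fun s => uXT u s y) :=
      cU.comp (continuous_id.prodMk continuous_const)
    have := intervalIntegral.integral_eq_sub_of_hasDerivAt
      (fun s _ => hasDerivAt_uX_time hu s y) (cy.intervalIntegrable 0 t)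
    rw [this]; ring
  obtain ⟨B, hB⟩ := ((isCompact_Icc (a := (0 : ℝ)) (b := t)).prod
    (isCompact_Icc (a := (0 : ℝ)) (b := 1))).exists_bound_of_continuousOn cG.continuousOn
  have hder : HasDerivAt (fun y => ∫ s in (0 : ℝ)..t, uXT u s y)
      (∫ s in (0 : ℝ)..t, mixedRHS σ μ u s x) x := by
    refine (intervalIntegral.hasDerivAt_integral_of_dominated_loc_of_deriv_le
      (F := fun y s => uXT u s y) (F' := fun y s => mixedRHS σ μ u s y)
      (s := Ioo 0 1) (bound := fun _ => B) (Ioo_mem_nhds hx.1 hx.2) ?_ ?_ ?_ ?_ ?_ ?_).2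
    · exact Eventually.of_forall fun y => Continuous.aestronglyMeasurable
        (cU.comp (continuous_id.prodMk continuous_const))
    · exact Continuous.intervalIntegrable
        (cU.comp (continuous_id.prodMk continuous_const)) 0 t
    · exact Continuous.aestronglyMeasurable
        (cG.comp (continuous_id.prodMk continuous_const))
    · refine Eventually.of_forall fun s hs y hy => ?_
      rw [uIoc_of_le ht] at hs
      exact hB (s, y) ⟨⟨hs.1.le, hs.2⟩, ⟨hy.1.le, hy.2.le⟩⟩
    · exact intervalIntegrable_const
    · refine Eventually.of_forall fun s hs y hy => ?_
      rw [uIoc_of_le ht] at hs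
      exact hasDerivAt_uXT hσ h hs.1.le ⟨hy.1.le, hy.2.le⟩
  have h1 := (hasDerivAt_uX hu 0 x).add hder
  refine (hasDerivAt_uX hu t x).unique (h1.congr_of_eventuallyEq ?_)
  exact Eventually.of_forall fun y => hint y

lemma hasDerivAt_u_xx_time (hσ : 0 < σ) (h : IsClassicalSolution σ μ d u) {t x : ℝ} (ht : 0 < t)
    (hx : x ∈ Ioo (0 : ℝ) 1) :
    HasDerivAt (fun τ => u_xx u τ x) (mixedRHS σ μ u t x) t := by
  have cx : Continuous (fun s => mixedRHS σ μ u s x) :=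
    (continuous_mixedRHS h.1).comp (continuous_id.prodMk continuous_const)
  have h1 : HasDerivAt (fun τ => u_xx u 0 x + ∫ s in (0 : ℝ)..τ, mixedRHS σ μ u s x)
      (mixedRHS σ μ u t x) t :=
    (intervalIntegral.integral_hasDerivAt_right (cx.intervalIntegrable 0 t)
      cx.aestronglyMeasurable.stronglyMeasurableAtFilter cx.continuousAt).const_add _
  refine h1.congr_of_eventuallyEq ?_
  filter_upwards [lt_mem_nhds ht] with τ hτ
  exact u_xx_eq_integral hσ h hτ.le hx

end Solution

/-! ### Comparison with the barrier -/

/-- Second-order necessary condition at an interior minimum. -/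
lemma deriv2_nonneg_of_isLocalMin {f f' : ℝ → ℝ} {f'' x : ℝ} (hf : ∀ y, HasDerivAt f (f' y) y)
    (hf' : HasDerivAt f' f'' x) (hmin : IsLocalMin f x) : 0 ≤ f'' := by
  by_contra! hneg
  have e : deriv f = f' := funext fun y => (hf y).deriv
  have e2 : deriv (deriv f) x = f'' := by rw [e]; exact hf'.deriv
  have hmax : IsLocalMax f x :=
    isLocalMax_of_deriv_deriv_neg (by rw [e2]; exact hneg) hmin.deriv_eq_zero
      (hf x).continuousAt
  have hconst : f =ᶠ[nhds x] fun _ => f x := by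
    filter_upwards [hmin, hmax] with y h1 h2
    exact le_antisymm h2 h1
  have : deriv (deriv f) x = 0 := by
    rw [hconst.deriv.deriv_eq]; simp
  linarith

/-- A function nonnegative just before `t` and vanishing at `t` has nonpositive slope there. -/
lemma deriv_nonpos_of_left_nonneg {f : ℝ → ℝ} {f' t : ℝ} (hf : HasDerivAt f f' t)
    (ht : 0 < t) (h0 : f t = 0) (hpos : ∀ s, 0 ≤ s → s < t → 0 ≤ f s) : f' ≤ 0 := by
  have h1 := (hasDerivWithinAt_iff_tendsto_slope' (s := Iio t) (by simp)).1
    (hf.hasDerivWithinAt (s := Iio t))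
  refine le_of_tendsto h1 ?_
  filter_upwards [Ioo_mem_nhdsLT ht] with s hs
  rw [slope_def_field, h0]
  exact div_nonpos_of_nonneg_of_nonpos (by linarith [hpos s hs.1.le hs.2]) (by linarith [hs.2])

/-- Barrier estimate. With `a = σ⁻¹` and `κ = μ - a ≥ 0`, the auxiliary field
`h = u_t - σ u_xx + κ u` turns the equation into the cooperative system
`u_t = σ u_xx - κ u + h`, `h_t = a (κ u - h)`, and `((1 - x) D + C φ e^{-δt},
κ (1 - x) D + C λ φ e^{-δt})` with `φ = 2 - x²` is a supersolution of it. -/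
lemma upper_barrier {σ μ : ℝ} {d : ℝ → ℝ} {u : ℝ → ℝ → ℝ} (hσ : 0 < σ) (hμσ : 1 ≤ μ * σ)
    (h : IsClassicalSolution σ μ d u) {D : ℝ} (hD : 0 ≤ D) (hd : ∀ t, 0 ≤ t → d t ≤ D) :
    ∃ C δ : ℝ, 0 < C ∧ 0 < δ ∧ ∀ t x, 0 ≤ t → x ∈ Icc (0 : ℝ) 1 →
      u t x ≤ (1 - x) * D + C * exp (-δ * t) := by
  have hu := h.1
  obtain ⟨-, -, hpde, hbc⟩ := id h
  have cu : Continuous (Function.uncurry u) := hu.continuous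
  have cut := (contDiff_u_t hu).continuous
  have cuxx := continuous_u_xx hu
  obtain ⟨a, ha⟩ : ∃ a, a = σ⁻¹ := ⟨_, rfl⟩
  have ha0 : 0 < a := by rw [ha]; positivity
  have haσ : a * σ = 1 := by rw [ha]; field_simp
  obtain ⟨κ, hκ⟩ : ∃ κ, κ = μ - a := ⟨_, rfl⟩
  have hκ0 : 0 ≤ κ := by
    have : a ≤ μ := by rw [ha]; exact (inv_le_iff_one_le_mul₀ hσ).2 hμσ
    linarith
  obtain ⟨η, hη⟩ : ∃ η, η = σ / 2 := ⟨_, rfl⟩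
  have hη0 : 0 < η := by rw [hη]; positivity
  -- `δ` is small enough for both supersolution inequalities.
  obtain ⟨δ, hδ0, hδ1, hδ2⟩ : ∃ δ, 0 < δ ∧ δ ≤ σ / 2 ∧ δ * (κ + η) ≤ a * η := by
    refine ⟨min (σ / 2) (a * η / (κ + η)), lt_min (by positivity) (by positivity),
      min_le_left _ _, ?_⟩
    rw [← le_div_iff₀ (by positivity)]
    exact min_le_right _ _
  obtain ⟨B₁, hB₁⟩ := (isCompact_Icc (a := (0 : ℝ)) (b := 1)).exists_bound_of_continuousOn
    (f := fun x => u 0 x) (cu.comp (continuous_const.prodMk continuous_id)).continuousOn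
  obtain ⟨B₂, hB₂⟩ := (isCompact_Icc (a := (0 : ℝ)) (b := 1)).exists_bound_of_continuousOn
    (f := fun x => u_t u 0 x - σ * u_xx u 0 x + κ * u 0 x)
    (((cut.comp (continuous_const.prodMk continuous_id)).sub
      (continuous_const.mul (cuxx.comp (continuous_const.prodMk continuous_id)))).add
      (continuous_const.mul (cu.comp (continuous_const.prodMk continuous_id)))).continuousOn
  have hB₁0 : 0 ≤ B₁ := (norm_nonneg _).trans (hB₁ 0 (by simp))
  have hB₂0 : 0 ≤ B₂ := (norm_nonneg _).trans (hB₂ 0 (by simp))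
  obtain ⟨C, hC⟩ : ∃ C, C = B₁ + B₂ / η + 1 := ⟨_, rfl⟩
  have hC0 : 0 < C := by rw [hC]; positivity
  have hC1 : B₁ < C := by
    have : 0 ≤ B₂ / η := by positivity
    linarith
  have hC2 : B₂ < C * η := by
    rw [hC]
    have : (B₁ + B₂ / η + 1) * η = B₁ * η + B₂ + η := by field_simp
    rw [this]; nlinarith
  obtain ⟨E, hE⟩ : ∃ E : ℝ → ℝ, E = fun t => C * exp (-δ * t) := ⟨_, rfl⟩
  have hE0 : ∀ t, 0 < E t := fun t => by rw [hE]; positivity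
  have hEd : ∀ t, HasDerivAt E (-δ * E t) t := by
    intro t
    have h1 : HasDerivAt (fun s : ℝ => -δ * s) (-δ) t := by
      simpa using (hasDerivAt_id t).const_mul (-δ)
    have := h1.exp.const_mul C
    rw [hE]
    refine this.congr_deriv ?_
    show C * (exp (-δ * t) * -δ) = -δ * (C * exp (-δ * t))
    ring
  have hEi : E 0 = C := by rw [hE]; simp
  have cE : Continuous E := continuous_iff_continuousAt.2 fun t => (hEd t).continuousAt
  have main : ∀ t x, 0 ≤ t → x ∈ Icc (0 : ℝ) 1 →
      0 < (1 - x) * D - u t x + (2 - x ^ 2) * E t := by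
    by_contra! hcon
    obtain ⟨T, X, hT, hX, hneg⟩ := hcon
    let V : ℝ × ℝ → ℝ := fun p => (1 - p.2) * D - u p.1 p.2 + (2 - p.2 ^ 2) * E p.1
    have cV : Continuous V := by
      have c1 : Continuous fun p : ℝ × ℝ => u p.1 p.2 := cu
      have c2 : Continuous fun p : ℝ × ℝ => E p.1 := cE.comp continuous_fst
      fun_prop
    have hcomp : IsCompact ((Icc (0 : ℝ) T ×ˢ Icc (0 : ℝ) 1) ∩ {p | V p ≤ 0}) :=
      (isCompact_Icc.prod isCompact_Icc).inter_right (isClosed_le cV continuous_const)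
    obtain ⟨⟨t₀, x₀⟩, ⟨⟨ht₀, hx₀⟩, hV₀⟩, hmin⟩ := hcomp.exists_isMinOn
      ⟨(T, X), ⟨⟨hT, le_rfl⟩, hX⟩, hneg⟩ continuous_fst.continuousOn
    simp only at ht₀ hx₀
    have hbefore : ∀ t x, 0 ≤ t → t < t₀ → x ∈ Icc (0 : ℝ) 1 → 0 < V (t, x) := by
      intro t x ht htt hx
      by_contra! hle
      have : t₀ ≤ t := hmin (show (t, x) ∈ _ from ⟨⟨⟨ht, htt.le.trans ht₀.2⟩, hx⟩, hle⟩)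
      linarith
    have hinit : ∀ x ∈ Icc (0 : ℝ) 1, 0 < V (0, x) := by
      intro x hx
      have h1 := (abs_le.1 (hB₁ x hx)).2
      simp only [V, hEi]
      have h2 : 0 ≤ (1 - x) * D := mul_nonneg (by linarith [hx.2]) hD
      have h3 : x ^ 2 ≤ 1 := pow_le_one₀ hx.1 hx.2
      nlinarith
    have ht₀0 : 0 < t₀ := by
      rcases ht₀.1.eq_or_lt with e | e
      · subst e
        exact absurd hV₀ (not_le.2 (hinit x₀ hx₀))
      · exact e
    have hat : ∀ x ∈ Icc (0 : ℝ) 1, 0 ≤ V (t₀, x) := by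
      intro x hx
      have c : ContinuousAt (fun t => V (t, x)) t₀ :=
        (cV.comp (continuous_id.prodMk continuous_const)).continuousAt
      refine ge_of_tendsto (c.tendsto.mono_left (nhdsWithin_le_nhds (s := Iio t₀))) ?_
      filter_upwards [Ioo_mem_nhdsLT ht₀0] with s hs
      exact (hbefore s x hs.1.le hs.2 hx).le
    have hV0 : V (t₀, x₀) = 0 := le_antisymm hV₀ (hat x₀ hx₀)
    have hx0 : x₀ ≠ 0 := by
      rintro rfl
      simp only [V, (hbc t₀ ht₀.1).1] at hV0
      nlinarith [hd t₀ ht₀.1, hE0 t₀]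
    have hx1 : x₀ ≠ 1 := by
      rintro rfl
      simp only [V, (hbc t₀ ht₀.1).2] at hV0
      nlinarith [hE0 t₀]
    have hxo : x₀ ∈ Ioo (0 : ℝ) 1 :=
      ⟨lt_of_le_of_ne hx₀.1 (Ne.symm hx0), lt_of_le_of_ne hx₀.2 hx1⟩
    have hφ1 : x₀ ^ 2 ≤ 1 := pow_le_one₀ hx₀.1 hx₀.2
    have hφ2 : 0 ≤ x₀ ^ 2 := sq_nonneg _
    have hVt : -u_t u t₀ x₀ + (2 - x₀ ^ 2) * (-δ * E t₀) ≤ 0 := by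
      refine deriv_nonpos_of_left_nonneg (f := fun t => V (t, x₀)) ?_ ht₀0 hV0
        fun s hs hst => (hbefore s x₀ hs hst hx₀).le
      exact ((hasDerivAt_time hu t₀ x₀).const_sub ((1 - x₀) * D)).add
        ((hEd t₀).const_mul (2 - x₀ ^ 2))
    have hVxx : 0 ≤ -u_xx u t₀ x₀ + (-2) * E t₀ := by
      refine deriv2_nonneg_of_isLocalMin (f := fun x => V (t₀, x))
        (f' := fun x => -D - uX u t₀ x + (-(2 * x)) * E t₀) (x := x₀) ?_ ?_ ?_
      · intro y
        have h1 : HasDerivAt (fun x : ℝ => (1 - x) * D) (-D) y := by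
          simpa using ((hasDerivAt_id y).const_sub 1).mul_const D
        have h2 : HasDerivAt (fun x : ℝ => 2 - x ^ 2) (-(2 * y)) y := by
          simpa using (hasDerivAt_pow 2 y).const_sub 2
        exact (h1.sub (hasDerivAt_space hu t₀ y)).add (h2.mul_const (E t₀))
      · have h2 : HasDerivAt (fun x : ℝ => -(2 * x)) (-2) x₀ := by
          simpa using ((hasDerivAt_id x₀).const_mul 2).fun_neg
        exact ((hasDerivAt_uX hu t₀ x₀).const_sub (-D)).add (h2.mul_const (E t₀))
      · filter_upwards [Ioo_mem_nhds hxo.1 hxo.2] with y hy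
        rw [hV0]
        exact hat y ⟨hy.1.le, hy.2.le⟩
    -- `K` is the gap of the auxiliary field; `e^{at} K` is nondecreasing while `V ≥ 0`.
    let K : ℝ → ℝ := fun t => κ * ((1 - x₀) * D)
      - (u_t u t x₀ - σ * u_xx u t x₀ + κ * u t x₀) + (κ + η) * (2 - x₀ ^ 2) * E t
    have cK : Continuous K := by
      have c1 : Continuous fun t => u t x₀ := cu.comp (continuous_id.prodMk continuous_const)
      have c2 : Continuous fun t => u_t u t x₀ := cut.comp (continuous_id.prodMk continuous_const)
      have c3 : Continuous fun t => u_xx u t x₀ :=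
        cuxx.comp (continuous_id.prodMk continuous_const)
      fun_prop
    have hKd : ∀ t, 0 < t → HasDerivAt K
        (-(u_tt u t x₀ - σ * mixedRHS σ μ u t x₀ + κ * u_t u t x₀)
          + (κ + η) * (2 - x₀ ^ 2) * (-δ * E t)) t := by
      intro t ht
      exact ((((hasDerivAt_u_t hu t x₀).sub
        ((hasDerivAt_u_xx_time hσ h ht hxo).const_mul σ)).add
        ((hasDerivAt_time hu t x₀).const_mul κ)).const_sub _).add ((hEd t).const_mul _)
    have hexp : ∀ t, HasDerivAt (fun s : ℝ => exp (a * s)) (exp (a * t) * a) t := by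
      intro t
      have h1 : HasDerivAt (fun s : ℝ => a * s) a t := by
        simpa using (hasDerivAt_id t).const_mul a
      exact h1.exp
    have hmono : MonotoneOn (fun t => exp (a * t) * K t) (Icc 0 t₀) := by
      refine monotoneOn_of_hasDerivWithinAt_nonneg (convex_Icc 0 t₀)
        (f' := fun t => exp (a * t) * a * K t + exp (a * t) *
          (-(u_tt u t x₀ - σ * mixedRHS σ μ u t x₀ + κ * u_t u t x₀)
          + (κ + η) * (2 - x₀ ^ 2) * (-δ * E t))) ?_ ?_ ?_
      · have : Continuous fun t => exp (a * t) * K t := by fun_prop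
        exact this.continuousOn
      · intro t ht
        rw [interior_Icc] at ht
        exact ((hexp t).mul (hKd t ht.1)).hasDerivWithinAt
      · intro t ht
        rw [interior_Icc] at ht
        have hVp := hbefore t x₀ ht.1.le ht.2 hx₀
        have hσG : σ * mixedRHS σ μ u t x₀ = u_tt u t x₀ - u_xx u t x₀ + μ * u_t u t x₀ := by
          unfold mixedRHS; field_simp
        have hident : a * K t + (-(u_tt u t x₀ - σ * mixedRHS σ μ u t x₀ + κ * u_t u t x₀)
          + (κ + η) * (2 - x₀ ^ 2) * (-δ * E t))
          = a * κ * V (t, x₀) + (a * η - δ * (κ + η)) * ((2 - x₀ ^ 2) * E t) := by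
          rw [hσG]
          simp only [K, V]
          linear_combination (u_xx u t x₀) * haσ - (u_t u t x₀) * hκ
        have h1 : 0 ≤ a * κ * V (t, x₀) + (a * η - δ * (κ + η)) * ((2 - x₀ ^ 2) * E t) := by
          refine add_nonneg (mul_nonneg (by positivity) hVp.le) (mul_nonneg (by linarith) ?_)
          exact mul_nonneg (by linarith) (hE0 t).le
        have h2 := mul_nonneg (exp_pos (a * t)).le (hident ▸ h1)
        linarith [h2]
    have hK0 : 0 < K 0 := by
      have h1 := (abs_le.1 (hB₂ x₀ hx₀)).2
      simp only [K, hEi]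
      have h2 : 0 ≤ κ * ((1 - x₀) * D) :=
        mul_nonneg hκ0 (mul_nonneg (by linarith [hx₀.2]) hD)
      have h3 : C * η ≤ (κ + η) * (2 - x₀ ^ 2) * C := by
        have : η * 1 ≤ (κ + η) * (2 - x₀ ^ 2) :=
          mul_le_mul (by linarith) (by linarith) (by norm_num) (by linarith)
        nlinarith
      linarith
    have hK1 : 0 < K t₀ := by
      have := hmono ⟨le_rfl, ht₀0.le⟩ ⟨ht₀0.le, le_rfl⟩ ht₀0.le
      simp only [mul_zero, exp_zero, one_mul] at this
      exact pos_of_mul_pos_right (hK0.trans_le this) (exp_pos _).le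
    have h5 : σ * u_xx u t₀ x₀ ≤ σ * (-2 * E t₀) :=
      mul_le_mul_of_nonneg_left (by linarith) hσ.le
    have h6 : (δ + η) * ((2 - x₀ ^ 2) * E t₀) ≤ σ * (2 * E t₀) :=
      mul_le_mul (by linarith) (by nlinarith [hE0 t₀])
        (mul_nonneg (by linarith) (hE0 t₀).le) hσ.le
    simp only [V] at hV0
    simp only [K] at hK1
    have h7 : κ * ((1 - x₀) * D - u t₀ x₀ + (2 - x₀ ^ 2) * E t₀) = 0 := by rw [hV0, mul_zero]
    linarith
  refine ⟨2 * C, δ, by positivity, hδ0, fun t x ht hx => ?_⟩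
  have h1 := main t x ht hx
  have h2 : (2 - x ^ 2) * E t ≤ 2 * E t := by nlinarith [hE0 t, sq_nonneg x]
  have h3 : 2 * E t = 2 * C * exp (-δ * t) := by rw [hE]; ring
  linarith

lemma IsClassicalSolution.neg {σ μ : ℝ} {d : ℝ → ℝ} {u : ℝ → ℝ → ℝ}
    (h : IsClassicalSolution σ μ d u) :
    IsClassicalSolution σ μ (fun t => -d t) (fun t x => -u t x) := by
  obtain ⟨hu, hut, hpde, hbc⟩ := h
  have e1 : ∀ t x, u_t (fun t x => -u t x) t x = -u_t u t x := fun t x => by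
    simp [u_t, deriv.fun_neg]
  have dn : ∀ f : ℝ → ℝ, deriv (deriv fun y => -f y) = fun y => -deriv (deriv f) y := by
    intro f
    have : (deriv fun y => -f y) = fun y => -deriv f y := by ext y; exact deriv.fun_neg
    rw [this]; ext y; exact deriv.fun_neg
  refine ⟨?_, fun t ht => ?_, fun t x ht hx => ?_, fun t ht => ?_⟩
  · exact hu.neg
  · simp only [e1]; exact (hut t ht).neg
  · have := hpde t x ht hx
    have e2 : u_tt (fun t x => -u t x) t x = -u_tt u t x := by simp only [u_tt, dn]
    have e3 : u_xx (fun t x => -u t x) t x = -u_xx u t x := by simp only [u_xx, dn]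
    have e4 : u_txx (fun t x => -u t x) t x = -u_txx u t x := by simp only [u_txx, e1, dn]
    rw [e1, e2, e3, e4, this]; ring
  · simp [hbc t ht]

/-! ### The gain in the `L²` norm -/

lemma integral_sq_affine (D e : ℝ) :
    ∫ x in (0 : ℝ)..1, ((1 - x) * D + e) ^ 2 = D ^ 2 / 3 + D * e + e ^ 2 := by
  have hder : ∀ x ∈ uIcc (0 : ℝ) 1, HasDerivAt
      (fun x : ℝ => -(1 - x) ^ 3 / 3 * D ^ 2 - (1 - x) ^ 2 * (D * e) + e ^ 2 * x)
      (((1 - x) * D + e) ^ 2) x := by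
    intro x _
    have h0 : HasDerivAt (fun x : ℝ => 1 - x) (-1) x := by
      simpa using (hasDerivAt_id x).const_sub 1
    have h1 := (((h0.pow 3).neg.div_const 3).mul_const (D ^ 2)).sub
      ((h0.pow 2).mul_const (D * e))
    have h2 := h1.add ((hasDerivAt_id x).const_mul (e ^ 2))
    refine h2.congr_deriv ?_
    simp; ring
  rw [intervalIntegral.integral_eq_sub_of_hasDerivAt hder
    (Continuous.intervalIntegrable (by fun_prop) 0 1)]
  norm_num; ring

lemma gain_upper {σ μ : ℝ} (hσ : 0 < σ) (hμσ : 1 ≤ μ * σ) {d : ℝ → ℝ} {u : ℝ → ℝ → ℝ}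
    (hd : BddC2 d) (h : IsClassicalSolution σ μ d u) :
    Filter.limsup (fun t => L2Norm u t) Filter.atTop ≤ (1 / Real.sqrt 3) * supD d := by
  obtain ⟨-, M, hM⟩ := hd
  have hle : ∀ t, 0 ≤ t → |d t| ≤ supD d := fun t ht =>
    le_csSup ⟨M, by rintro y ⟨s, hs, rfl⟩; exact hM s hs⟩ ⟨t, ht, rfl⟩
  have hD : 0 ≤ supD d := (abs_nonneg _).trans (hle 0 le_rfl)
  obtain ⟨C₁, δ₁, hC₁, hδ₁, hb₁⟩ := upper_barrier hσ hμσ h hD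
    (fun t ht => (le_abs_self _).trans (hle t ht))
  obtain ⟨C₂, δ₂, hC₂, hδ₂, hb₂⟩ := upper_barrier hσ hμσ h.neg hD
    (fun t ht => (neg_le_abs _).trans (hle t ht))
  let e : ℝ → ℝ := fun t => C₁ * exp (-δ₁ * t) + C₂ * exp (-δ₂ * t)
  have hexp : ∀ δ : ℝ, 0 < δ → Tendsto (fun t : ℝ => exp (-δ * t)) atTop (nhds 0) := by
    intro δ hδ
    refine tendsto_exp_atBot.comp ?_
    exact tendsto_id.const_mul_atTop_of_neg (by linarith)
  have he : Tendsto e atTop (nhds 0) := by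
    have := ((hexp δ₁ hδ₁).const_mul C₁).add ((hexp δ₂ hδ₂).const_mul C₂)
    simp only [mul_zero, add_zero] at this
    exact this
  have hlim : Tendsto (fun t => Real.sqrt (supD d ^ 2 / 3 + supD d * e t + e t ^ 2)) atTop
      (nhds (1 / Real.sqrt 3 * supD d)) := by
    have h1 := ((he.const_mul (supD d)).const_add (supD d ^ 2 / 3)).add (he.pow 2)
    have h2 := (Real.continuous_sqrt.tendsto _).comp h1
    have h3 : Real.sqrt (supD d ^ 2 / 3 + supD d * 0 + 0 ^ 2) = 1 / Real.sqrt 3 * supD d := by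
      rw [mul_zero, add_zero, zero_pow two_ne_zero, add_zero, Real.sqrt_div (sq_nonneg _),
        Real.sqrt_sq hD]
      ring
    rw [h3] at h2
    exact h2
  rw [← hlim.limsup_eq]
  refine Filter.limsup_le_limsup ?_ ?_ hlim.isBoundedUnder_le
  · filter_upwards [eventually_ge_atTop 0] with t ht
    refine Real.sqrt_le_sqrt ?_
    rw [← integral_sq_affine]
    have cu : Continuous fun x => u t x :=
      h.1.continuous.comp (continuous_const.prodMk continuous_id)
    refine intervalIntegral.integral_mono_on zero_le_one
      (Continuous.intervalIntegrable (by fun_prop) 0 1)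
      (Continuous.intervalIntegrable (by fun_prop) 0 1) fun x hx => ?_
    have p1 : 0 < C₁ * exp (-δ₁ * t) := by positivity
    have p2 : 0 < C₂ * exp (-δ₂ * t) := by positivity
    have q1 := hb₁ t x ht hx
    have q2 := hb₂ t x ht hx
    refine sq_le_sq' ?_ ?_ <;> simp only [e] <;> linarith
  · exact Filter.isCoboundedUnder_le_of_le atTop (x := 0) fun t => Real.sqrt_nonneg _

/-- The steady state `u(t,x) = 1 - x` driven by `d ≡ 1` attains the gain `1/√3`. -/
lemma gain_lower {σ μ γ : ℝ}
    (hγ : ∀ (d : ℝ → ℝ) (u : ℝ → ℝ → ℝ), BddC2 d → IsClassicalSolution σ μ d u →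
        Filter.limsup (fun t => L2Norm u t) Filter.atTop ≤ γ * supD d) :
    1 / Real.sqrt 3 ≤ γ := by
  have hsol : IsClassicalSolution σ μ (fun _ => 1) (fun _ x => 1 - x) := by
    refine ⟨?_, fun t _ => ?_, fun t x _ _ => ?_, fun t _ => ?_⟩
    · exact contDiff_const.sub contDiff_snd
    · simp only [u_t, deriv_const]; exact contDiff_const
    · have e : (deriv fun y : ℝ => 1 - y) = fun _ => -1 := by
        ext y; simp
      simp [u_tt, u_xx, u_txx, u_t, e]
    · simp
  have h := hγ _ _ ⟨contDiff_const, 1, by simp⟩ hsol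
  have hs : supD (fun _ => 1) = 1 := by
    have : {y : ℝ | ∃ t : ℝ, 0 ≤ t ∧ y = |(1 : ℝ)|} = {1} := by
      ext y
      simp only [mem_ofPred_eq, mem_singleton_iff, abs_one]
      exact ⟨fun ⟨_, _, hy⟩ => hy, fun hy => ⟨0, le_rfl, hy⟩⟩
    simp only [supD, this, csSup_singleton]
  have hL : (fun t => L2Norm (fun _ x => 1 - x) t) = fun _ => 1 / Real.sqrt 3 := by
    ext t
    have := integral_sq_affine 1 0
    norm_num at this
    simp [L2Norm, this]
  rw [hs, hL] at h
  simpa using h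

/-- when `μσ ≥ 1`, the asymptotic gain of the displacement in the spatial
L² norm equals `1/√3`: the constant `1/√3` is an asymptotic-gain constant, and any
asymptotic-gain constant `γ` satisfies `γ ≥ 1/√3`. -/
theorem asymptotic_gain_L2_eq_inv_sqrt_three
    (σ μ : ℝ) (hσ : 0 < σ) (hμ : 0 ≤ μ) (hμσ : 1 ≤ μ * σ) :
    (∀ (d : ℝ → ℝ) (u : ℝ → ℝ → ℝ), BddC2 d → IsClassicalSolution σ μ d u →
      Filter.limsup (fun t => L2Norm u t) Filter.atTop ≤ (1 / Real.sqrt 3) * supD d) ∧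
    (∀ γ : ℝ, 0 ≤ γ →
      (∀ (d : ℝ → ℝ) (u : ℝ → ℝ → ℝ), BddC2 d → IsClassicalSolution σ μ d u →
        Filter.limsup (fun t => L2Norm u t) Filter.atTop ≤ γ * supD d) →
      1 / Real.sqrt 3 ≤ γ) := by
  exact ⟨fun _ _ hd h => gain_upper hσ hμσ hd h, fun _ _ h => gain_lower h⟩
end
end

section
/- Let σ > 0, μ ≥ 0 and ω > 0. Define r := ω√((μσ−1)²ω² + (μ+σω²)²)/(1+σ²ω²), let θ ∈ (0,π) be the unique angle with cos(θ) = (μσ−1)ω²/((1+σ²ω²)r) and sin(θ) = (μ+σω²)ω/((1+σ²ω²)r), and set a := √r·cos(θ/2), b := √r·sin(θ/2). Then the functions h(x) := ((cosh(a(2−x)) − cos(2b)cosh(ax))cos(bx) − sin(2b)sin(bx)cosh(ax))/(cosh(2a) − cos(2b)) and g(x) := (sin(2b)cos(bx)sinh(ax) − (sinh(a(2−x)) + cos(2b)sinh(ax))sin(bx))/(cosh(2a) − cos(2b)) satisfy, for all x ∈ [0,1], the ordinary differential system σω g''(x) − μω g(x) − ω² h(x) − h''(x) = 0 and ω² g(x)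 + g''(x) + σω h''(x) − μω h(x) = 0, together with the boundary conditions h(0) = 1, h(1) = 0, g(0) = 0, g(1) = 0. -/
/-!
With `λ = a + ib` and `u = h + ig`, the system reads `(1 + iσω) u'' = (iμω - ω²) u`, and the
definitions of `r` and `θ` say exactly that `λ² = r e^{iθ} = (iμω - ω²) / (1 + iσω)`. The given
`h`, `g` are the real and imaginary parts of `u(x) = sinh(λ(1 - x)) / sinh λ`, so `u'' = λ² u`,
`u(0) = 1` and `u(1) = 0`. The denominator `cosh 2a - cos 2b = 2|sinh λ|²` is nonzero since `a ≠ 0`.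

In real terms, `lambda_sq` computes `a² - b² = Re λ²` and `2ab = Im λ² > 0`, while
`profile_second_deriv` is the real form of `u'' = λ² u`.
-/

open Real

noncomputable section

/-- `r := ω√((μσ−1)²ω² + (μ+σω²)²)/(1+σ²ω²)`. -/
def rfreq (σ μ ω : ℝ) : ℝ :=
  ω * Real.sqrt ((μ * σ - 1) ^ 2 * ω ^ 2 + (μ + σ * ω ^ 2) ^ 2) / (1 + σ ^ 2 * ω ^ 2)

/-- The unique angle `θ ∈ (0,π)` with `cos(θ) = (μσ−1)ω²/((1+σ²ω²)r)` and
`sin(θ) = (μ+σω²)ω/((1+σ²ω²)r)`; since the sine is positive it is given by `arccos`. -/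
def θfreq (σ μ ω : ℝ) : ℝ :=
  Real.arccos ((μ * σ - 1) * ω ^ 2 / ((1 + σ ^ 2 * ω ^ 2) * rfreq σ μ ω))

/-- `a := √r·cos(θ/2)`. -/
def afreq (σ μ ω : ℝ) : ℝ := Real.sqrt (rfreq σ μ ω) * Real.cos (θfreq σ μ ω / 2)

/-- `b := √r·sin(θ/2)`. -/
def bfreq (σ μ ω : ℝ) : ℝ := Real.sqrt (rfreq σ μ ω) * Real.sin (θfreq σ μ ω / 2)

/-- The real and imaginary parts of `(a + ib)² = r e^{iθ}`. -/
lemma lambda_sq (σ μ ω : ℝ) (hσ : 0 < σ) (hμ : 0 ≤ μ) (hω : 0 < ω) :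
    afreq σ μ ω ^ 2 - bfreq σ μ ω ^ 2 = (μ * σ - 1) * ω ^ 2 / (1 + σ ^ 2 * ω ^ 2) ∧
    2 * afreq σ μ ω * bfreq σ μ ω = (μ + σ * ω ^ 2) * ω / (1 + σ ^ 2 * ω ^ 2) := by
  have hd : 0 < 1 + σ ^ 2 * ω ^ 2 := by positivity
  have hB0 : 0 < μ + σ * ω ^ 2 := by positivity
  have hS : 0 < (μ * σ - 1) ^ 2 * ω ^ 2 + (μ + σ * ω ^ 2) ^ 2 := by positivity
  have hr : 0 < rfreq σ μ ω := by unfold rfreq; positivity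
  set A := (μ * σ - 1) * ω ^ 2 / (1 + σ ^ 2 * ω ^ 2) with hA
  set B := (μ + σ * ω ^ 2) * ω / (1 + σ ^ 2 * ω ^ 2) with hB
  have hBpos : 0 < B := by positivity
  have hr2 : rfreq σ μ ω ^ 2 = A ^ 2 + B ^ 2 := by
    unfold rfreq
    rw [div_pow, mul_pow, Real.sq_sqrt hS.le, hA, hB]
    field_simp
  have hθ : θfreq σ μ ω = Real.arccos (A / rfreq σ μ ω) := by
    unfold θfreq
    rw [hA, div_div]
  have hsq : Real.sqrt (rfreq σ μ ω) ^ 2 = rfreq σ μ ω := Real.sq_sqrt hr.le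
  unfold afreq bfreq
  set r := rfreq σ μ ω
  set θ := θfreq σ μ ω
  have hle : |A / r| ≤ 1 := by
    rw [abs_div, abs_of_pos hr, div_le_one hr]
    exact abs_le_of_sq_le_sq (by nlinarith [sq_nonneg B]) hr.le
  have hcos : Real.cos θ = A / r := by
    rw [hθ, Real.cos_arccos (abs_le.mp hle).1 (abs_le.mp hle).2]
  have hsin : Real.sin θ = B / r := by
    rw [hθ, Real.sin_arccos, show 1 - (A / r) ^ 2 = (B / r) ^ 2 by
      field_simp
      linarith, Real.sqrt_sq (by positivity)]
  have h2 : θ = 2 * (θ / 2) := by ring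
  constructor
  · have : Real.cos θ = Real.cos (θ / 2) ^ 2 - Real.sin (θ / 2) ^ 2 := by
      conv_lhs => rw [h2, Real.cos_two_mul']
    rw [mul_pow, mul_pow, hsq, ← mul_sub, ← this, hcos]
    field_simp
  · have : Real.sin θ = 2 * Real.sin (θ / 2) * Real.cos (θ / 2) := by
      conv_lhs => rw [h2, Real.sin_two_mul]
    calc _ = Real.sqrt r ^ 2 * (2 * Real.sin (θ / 2) * Real.cos (θ / 2)) := by ring
      _ = B := by
        rw [hsq, ← this, hsin]
        field_simp

/-- Real form of `u'' = (a + ib)² u` for `u = h + ig`. It holds for all constants `C`, `S`, `D`;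
the profile of interest has `C = cos 2b`, `S = sin 2b` and `D = cosh 2a - cos 2b`. -/
lemma profile_second_deriv (a b C S D : ℝ) (h g : ℝ → ℝ)
    (hh : h = fun x =>
      ((Real.cosh (a * (2 - x)) - C * Real.cosh (a * x)) * Real.cos (b * x) -
        S * Real.sin (b * x) * Real.cosh (a * x)) / D)
    (hg : g = fun x =>
      (S * Real.cos (b * x) * Real.sinh (a * x) -
        (Real.sinh (a * (2 - x)) + C * Real.sinh (a * x)) * Real.sin (b * x)) / D) (x : ℝ) :
    deriv (deriv h) x = (a ^ 2 - b ^ 2) * h x - 2 * a * b * g x ∧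
    deriv (deriv g) x = 2 * a * b * h x + (a ^ 2 - b ^ 2) * g x := by
  have lin (c y : ℝ) : HasDerivAt (fun x : ℝ => c * x) c y := by
    simpa using (hasDerivAt_id y).const_mul c
  have rev (y : ℝ) : HasDerivAt (fun x : ℝ => a * (2 - x)) (-a) y := by
    simpa using ((hasDerivAt_id y).const_sub 2).const_mul a
  have c1 (y : ℝ) := (lin a y).cosh
  have s1 (y : ℝ) := (lin a y).sinh
  have c2 (y : ℝ) := (rev y).cosh
  have s2 (y : ℝ) := (rev y).sinh
  have cb (y : ℝ) := (lin b y).cos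
  have sb (y : ℝ) := (lin b y).sin
  -- `h1 + i g1` is the derivative of `u = h + ig`.
  let h1 : ℝ → ℝ := fun x =>
    (a * ((-Real.sinh (a * (2 - x)) - C * Real.sinh (a * x)) * Real.cos (b * x) -
        S * Real.sin (b * x) * Real.sinh (a * x)) -
      b * ((Real.cosh (a * (2 - x)) - C * Real.cosh (a * x)) * Real.sin (b * x) +
        S * Real.cos (b * x) * Real.cosh (a * x))) / D
  let g1 : ℝ → ℝ := fun x =>
    (a * (S * Real.cos (b * x) * Real.cosh (a * x) -
        (-Real.cosh (a * (2 - x)) + C * Real.cosh (a * x)) * Real.sin (b * x)) -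
      b * (S * Real.sin (b * x) * Real.sinh (a * x) +
        (Real.sinh (a * (2 - x)) + C * Real.sinh (a * x)) * Real.cos (b * x))) / D
  have dh : deriv h = h1 := by
    funext y
    rw [hh]
    refine HasDerivAt.deriv (HasDerivAt.congr_deriv (((((c2 y).sub ((c1 y).const_mul C)).mul (cb y)).sub
      (((sb y).const_mul S).mul (c1 y))).div_const D) ?_)
    simp only [h1, Pi.sub_apply]
    ring
  have dg : deriv g = g1 := by
    funext y
    rw [hg]
    refine HasDerivAt.deriv (HasDerivAt.congr_deriv (((((cb y).const_mul S).mul (s1 y)).sub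
      (((s2 y).add ((s1 y).const_mul C)).mul (sb y))).div_const D) ?_)
    simp only [g1, Pi.add_apply]
    ring
  rw [dh, dg, hh, hg]
  constructor
  · refine HasDerivAt.deriv (HasDerivAt.congr_deriv (((((((s2 x).neg.sub ((s1 x).const_mul C)).mul (cb x)).sub
      (((sb x).const_mul S).mul (s1 x))).const_mul a).sub
      (((((c2 x).sub ((c1 x).const_mul C)).mul (sb x)).add
      (((cb x).const_mul S).mul (c1 x))).const_mul b)).div_const D) ?_)
    simp only [Pi.sub_apply, Pi.neg_apply]
    ring
  · refine HasDerivAt.deriv (HasDerivAt.congr_deriv (((((((cb x).const_mul S).mul (c1 x)).sub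
      (((c2 x).neg.add ((c1 x).const_mul C)).mul (sb x))).const_mul a).sub
      (((((sb x).const_mul S).mul (s1 x)).add
      (((s2 x).add ((s1 x).const_mul C)).mul (cb x))).const_mul b)).div_const D) ?_)
    simp only [Pi.add_apply, Pi.neg_apply]
    ring

/-- the explicit functions `h`, `g` solve the ordinary differential system
`σω g'' − μω g − ω² h − h'' = 0`, `ω² g + g'' + σω h'' − μω h = 0` on `[0,1]` with the
boundary conditions `h(0) = 1`, `h(1) = 0`, `g(0) = 0`, `g(1) = 0`. -/
theorem explicit_periodic_profile_solves_ODE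
    (σ μ ω : ℝ) (hσ : 0 < σ) (hμ : 0 ≤ μ) (hω : 0 < ω)
    (a b : ℝ) (ha : a = afreq σ μ ω) (hb : b = bfreq σ μ ω)
    (h g : ℝ → ℝ)
    (hh : h = fun x =>
      ((Real.cosh (a * (2 - x)) - Real.cos (2 * b) * Real.cosh (a * x)) * Real.cos (b * x) -
        Real.sin (2 * b) * Real.sin (b * x) * Real.cosh (a * x)) /
      (Real.cosh (2 * a) - Real.cos (2 * b)))
    (hg : g = fun x =>
      (Real.sin (2 * b) * Real.cos (b * x) * Real.sinh (a * x) -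
        (Real.sinh (a * (2 - x)) + Real.cos (2 * b) * Real.sinh (a * x)) * Real.sin (b * x)) /
      (Real.cosh (2 * a) - Real.cos (2 * b))) :
    (∀ x ∈ Set.Icc (0:ℝ) 1,
      σ * ω * deriv (deriv g) x - μ * ω * g x - ω ^ 2 * h x - deriv (deriv h) x = 0 ∧
      ω ^ 2 * g x + deriv (deriv g) x + σ * ω * deriv (deriv h) x - μ * ω * h x = 0) ∧
    h 0 = 1 ∧ h 1 = 0 ∧ g 0 = 0 ∧ g 1 = 0 := by
  obtain ⟨hre, him⟩ := lambda_sq σ μ ω hσ hμ hω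
  rw [← ha, ← hb] at hre him
  have hd : 0 < 1 + σ ^ 2 * ω ^ 2 := by positivity
  have ha0 : a ≠ 0 := by
    rintro rfl
    have : 0 < (μ + σ * ω ^ 2) * ω / (1 + σ ^ 2 * ω ^ 2) := by positivity
    linarith
  have hD : Real.cosh (2 * a) - Real.cos (2 * b) ≠ 0 := by
    have h1 : 1 < Real.cosh (2 * a) := Real.one_lt_cosh.mpr (by simpa using ha0)
    linarith [Real.cos_le_one (2 * b)]
  refine ⟨fun x _ => ?_, ?_, ?_, ?_, ?_⟩
  · obtain ⟨h2, g2⟩ := profile_second_deriv a b _ _ _ h g hh hg x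
    rw [h2, g2, hre, him]
    constructor
    · field_simp
      ring
    · field_simp
      ring
  · rw [hh]
    simp only [mul_zero, sub_zero, Real.cosh_zero, Real.cos_zero, Real.sin_zero, mul_one,
      mul_comm a 2]
    exact div_self hD
  · rw [hh]
    simp only [mul_one, show (2 : ℝ) - 1 = 1 by norm_num]
    rw [Real.cos_two_mul, Real.sin_two_mul, div_eq_zero_iff]
    left
    linear_combination (-2 * Real.cosh a * Real.cos b) * Real.sin_sq_add_cos_sq b
  · rw [hg]
    simp
  · rw [hg]
    simp only [mul_one, show (2 : ℝ) - 1 = 1 by norm_num]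
    rw [Real.cos_two_mul, Real.sin_two_mul, div_eq_zero_iff]
    left
    ring
end
end

section
/- Let a > 0 and b > 0 be real numbers, and define h(x) := ((cosh(a(2−x)) − cos(2b)cosh(ax))cos(bx) − sin(2b)sin(bx)cosh(ax))/(cosh(2a) − cos(2b)) and g(x) := (sin(2b)cos(bx)sinh(ax) − (sinh(a(2−x)) + cos(2b)sinh(ax))sin(bx))/(cosh(2a) − cos(2b)). Then for all x ∈ [0,1]: h(x)² + g(x)² = (cosh(2a(1−x)) − cos(2b(1−x)))/(cosh(2a) − cos(2b)). -/
/-!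
With `u = a (1 - x)` and `v = b (1 - x)`, the numerators of `h` and `g` are the real part and, up to
sign, the imaginary part of
`cosh ((a + u) + i (b - v)) - cosh ((a - u) + i (b + v)) = 2 sinh (a + i b) sinh (u - i v)`.
Since `|sinh (s + i t)|² = (cosh 2s - cos 2t) / 2`, the sum of their squares is
`(cosh 2a - cos 2b) (cosh 2u - cos 2v)`, and dividing by `(cosh 2a - cos 2b)²` gives the claim.
The proof below is the real form of this computation; multiplicativity of the modulus becomes
the two-square identity.
-/

open Real intervalIntegral MeasureTheory

noncomputable section

/-- The profile `h`. -/
def hProf (a b : ℝ) (x : ℝ) : ℝ :=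
  ((Real.cosh (a * (2 - x)) - Real.cos (2 * b) * Real.cosh (a * x)) * Real.cos (b * x) -
    Real.sin (2 * b) * Real.sin (b * x) * Real.cosh (a * x)) /
  (Real.cosh (2 * a) - Real.cos (2 * b))

/-- The profile `g`. -/
def gProf (a b : ℝ) (x : ℝ) : ℝ :=
  (Real.sin (2 * b) * Real.cos (b * x) * Real.sinh (a * x) -
    (Real.sinh (a * (2 - x)) + Real.cos (2 * b) * Real.sinh (a * x)) * Real.sin (b * x)) /
  (Real.cosh (2 * a) - Real.cos (2 * b))

/-- The identity `2 |sinh (s + i t)|² = cosh 2s - cos 2t` in real form. -/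
lemma cosh_sub_cos_two_mul (s t : ℝ) :
    Real.cosh (2 * s) - Real.cos (2 * t) =
      2 * ((Real.cosh s * Real.sin t) ^ 2 + (Real.sinh s * Real.cos t) ^ 2) := by
  have h1 := Real.cosh_sq s
  have h2 := Real.sin_sq t
  rw [Real.cosh_two_mul, Real.cos_two_mul, mul_pow, mul_pow, h1, h2]
  ring

lemma cosh_sub_cos_pos {a : ℝ} (ha : 0 < a) (b : ℝ) :
    0 < Real.cosh (2 * a) - Real.cos (2 * b) := by
  have h1 : 1 < Real.cosh (2 * a) := Real.one_lt_cosh.2 (by positivity)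
  linarith [Real.cos_le_one (2 * b)]

lemma hProf_eq (a b x : ℝ) :
    hProf a b x = 2 * (Real.cosh a * Real.sin b * (Real.cosh (a * (1 - x)) * Real.sin (b * (1 - x)))
        + Real.sinh a * Real.cos b * (Real.sinh (a * (1 - x)) * Real.cos (b * (1 - x)))) /
      (Real.cosh (2 * a) - Real.cos (2 * b)) := by
  unfold hProf
  congr 1
  have hA : a * (2 - x) = a + a * (1 - x) := by ring
  have hp : a * x = a - a * (1 - x) := by ring
  have hr : Real.cos (2 * b) * Real.cos (b * x) + Real.sin (2 * b) * Real.sin (b * x) =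
      Real.cos (b + b * (1 - x)) := by
    rw [← Real.cos_sub]; congr 1; ring
  have hq : Real.cos (b * x) = Real.cos (b - b * (1 - x)) := by congr 1; ring
  calc _ = Real.cosh (a * (2 - x)) * Real.cos (b * x) - Real.cosh (a * x) *
        (Real.cos (2 * b) * Real.cos (b * x) + Real.sin (2 * b) * Real.sin (b * x)) := by ring
    _ = _ := by
      rw [hr, hq, hA, hp, Real.cosh_add, Real.cosh_sub, Real.cos_add, Real.cos_sub]
      ring

lemma gProf_eq (a b x : ℝ) :
    gProf a b x = 2 * (Real.sinh a * Real.cos b * (Real.cosh (a * (1 - x)) * Real.sin (b * (1 - x)))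
        - Real.cosh a * Real.sin b * (Real.sinh (a * (1 - x)) * Real.cos (b * (1 - x)))) /
      (Real.cosh (2 * a) - Real.cos (2 * b)) := by
  unfold gProf
  congr 1
  have hA : a * (2 - x) = a + a * (1 - x) := by ring
  have hp : a * x = a - a * (1 - x) := by ring
  have hr : Real.sin (2 * b) * Real.cos (b * x) - Real.cos (2 * b) * Real.sin (b * x) =
      Real.sin (b + b * (1 - x)) := by
    rw [← Real.sin_sub]; congr 1; ring
  have hq : Real.sin (b * x) = Real.sin (b - b * (1 - x)) := by congr 1; ring
  calc _ = Real.sinh (a * x) *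
        (Real.sin (2 * b) * Real.cos (b * x) - Real.cos (2 * b) * Real.sin (b * x)) -
        Real.sinh (a * (2 - x)) * Real.sin (b * x) := by ring
    _ = _ := by
      rw [hr, hq, hA, hp, Real.sinh_add, Real.sinh_sub, Real.sin_add, Real.sin_sub]
      ring

/-- `h(x)² + g(x)² = (cosh(2a(1−x)) − cos(2b(1−x)))/(cosh(2a) − cos(2b))`
for all `x ∈ [0,1]`. -/
theorem profile_sq_sum (a b : ℝ) (ha : 0 < a) (hb : 0 < b) :
    ∀ x ∈ Set.Icc (0:ℝ) 1,
      (hProf a b x) ^ 2 + (gProf a b x) ^ 2 =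
        (Real.cosh (2 * a * (1 - x)) - Real.cos (2 * b * (1 - x))) /
          (Real.cosh (2 * a) - Real.cos (2 * b)) := by
  intro x _
  have hD := (cosh_sub_cos_pos ha b).ne'
  rw [hProf_eq, gProf_eq, div_pow, div_pow, ← add_div, div_eq_div_iff (pow_ne_zero 2 hD) hD,
    mul_assoc 2 a, mul_assoc 2 b, cosh_sub_cos_two_mul (a * (1 - x)), cosh_sub_cos_two_mul a b]
  ring
end
end

section
/- Let a > 0 and b > 0 be real numbers, and define h(x) := ((cosh(a(2−x)) − cos(2b)cosh(ax))cos(bx) − sin(2b)sin(bx)cosh(ax))/(cosh(2a) − cos(2b)) and g(x) := (sin(2b)cos(bx)sinh(ax) − (sinh(a(2−x)) + cos(2b)sinh(ax))sin(bx))/(cosh(2a) − cos(2b)). Then ∫₀¹ h(x)·g(x) dx = sinh(2a)sin(2b)/(2(cosh(2a) − cos(2b))²) − (a·sin(2b) + b·sinh(2a))/(4(a²+b²)(cosh(2a) − cos(2b))). -/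
/-!
With `z = a + i b`, the profiles are the real and imaginary parts of
`F(x) = sinh (z (1 - x)) / sinh z`, and `cosh (2a) - cos (2b) = 2 |sinh z|²`.
Hence `h g = Im (F²) / 2`, where `F² = (cosh (2 z (1 - x)) - 1) / (2 sinh² z)` has the elementary
antiderivative coming from `sinh (2 z (1 - x)) / (2 z)`. Everything is written below in real and
imaginary parts: `sinh_sq_re` and `sinh_mul_im` give `sinh² = (cosh 2· - 1) / 2`,
`hProf_num` and `gProf_num` identify the profiles, `hProf_mul_gProf` computes the integrand, and
`integral_cosh_cos` and `integral_sinh_sin` integrate `cosh (2 z (1 - x))`.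
-/

open Real intervalIntegral MeasureTheory

noncomputable section

/-- Real part of `sinh² w = (cosh (2 w) - 1) / 2` for `w = u + i v`. -/
lemma sinh_sq_re (u v : ℝ) :
    (sinh u * cos v) ^ 2 - (cosh u * sin v) ^ 2 = (cosh (2 * u) * cos (2 * v) - 1) / 2 := by
  rw [Real.cosh_two_mul, Real.cos_two_mul, mul_pow, mul_pow, Real.cosh_sq, Real.sin_sq]
  ring

/-- Half the imaginary part of `sinh² w = (cosh (2 w) - 1) / 2` for `w = u + i v`. -/
lemma sinh_mul_im (u v : ℝ) :
    (sinh u * cos v) * (cosh u * sin v) = sinh (2 * u) * sin (2 * v) / 4 := by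
  rw [Real.sinh_two_mul, Real.sin_two_mul]
  ring

/-- The numerator of `h` is `2 Re (sinh (z (1 - x)) * conj (sinh z))`. -/
lemma hProf_num (a b x : ℝ) :
    (cosh (a * (2 - x)) - cos (2 * b) * cosh (a * x)) * cos (b * x) -
      sin (2 * b) * sin (b * x) * cosh (a * x) =
    2 * ((sinh a * cos b) * (sinh (a * (1 - x)) * cos (b * (1 - x))) +
      (cosh a * sin b) * (cosh (a * (1 - x)) * sin (b * (1 - x)))) := by
  have e1 : a * (2 - x) = a + a * (1 - x) := by ring
  have e2 : a * x = a - a * (1 - x) := by ring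
  have e3 : cos (2 * b) * cos (b * x) + sin (2 * b) * sin (b * x) = cos (b + b * (1 - x)) := by
    rw [← Real.cos_sub]; congr 1; ring
  have e4 : cos (b * x) = cos (b - b * (1 - x)) := by congr 1; ring
  calc _ = cosh (a * (2 - x)) * cos (b * x) -
        cosh (a * x) * (cos (2 * b) * cos (b * x) + sin (2 * b) * sin (b * x)) := by ring
    _ = _ := by
      rw [e3, e4, e1, e2, Real.cosh_add, Real.cosh_sub, Real.cos_add, Real.cos_sub]
      ring

/-- The numerator of `g` is `2 Im (sinh (z (1 - x)) * conj (sinh z))`. -/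
lemma gProf_num (a b x : ℝ) :
    sin (2 * b) * cos (b * x) * sinh (a * x) -
      (sinh (a * (2 - x)) + cos (2 * b) * sinh (a * x)) * sin (b * x) =
    2 * ((sinh a * cos b) * (cosh (a * (1 - x)) * sin (b * (1 - x))) -
      (cosh a * sin b) * (sinh (a * (1 - x)) * cos (b * (1 - x)))) := by
  have e1 : a * (2 - x) = a + a * (1 - x) := by ring
  have e2 : a * x = a - a * (1 - x) := by ring
  have e3 : sin (2 * b) * cos (b * x) - cos (2 * b) * sin (b * x) = sin (b + b * (1 - x)) := by
    rw [← Real.sin_sub]; congr 1; ring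
  have e4 : sin (b * x) = sin (b - b * (1 - x)) := by congr 1; ring
  calc _ = sinh (a * x) * (sin (2 * b) * cos (b * x) - cos (2 * b) * sin (b * x)) -
        sinh (a * (2 - x)) * sin (b * x) := by ring
    _ = _ := by
      rw [e3, e4, e1, e2, Real.sinh_add, Real.sinh_sub, Real.sin_add, Real.sin_sub]
      ring

/-- `h g = Im (F²) / 2`, using `1 / sinh² z = conj (sinh z)² / |sinh z|⁴`. -/
lemma hProf_mul_gProf (a b x : ℝ) :
    hProf a b x * gProf a b x =
      (cosh (2 * a) * cos (2 * b) - 1) / (2 * (cosh (2 * a) - cos (2 * b)) ^ 2) *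
          (sinh (2 * (a * (1 - x))) * sin (2 * (b * (1 - x)))) -
        sinh (2 * a) * sin (2 * b) / (2 * (cosh (2 * a) - cos (2 * b)) ^ 2) *
          (cosh (2 * (a * (1 - x))) * cos (2 * (b * (1 - x))) - 1) := by
  have h1 := sinh_sq_re a b
  have h2 := sinh_mul_im a b
  have h3 := sinh_sq_re (a * (1 - x)) (b * (1 - x))
  have h4 := sinh_mul_im (a * (1 - x)) (b * (1 - x))
  unfold hProf gProf
  rw [hProf_num, gProf_num]
  generalize sinh a * cos b = A at *
  generalize cosh a * sin b = B at *
  generalize sinh (a * (1 - x)) * cos (b * (1 - x)) = X at *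
  generalize cosh (a * (1 - x)) * sin (b * (1 - x)) = Y at *
  have k1 : cosh (2 * a) * cos (2 * b) - 1 = 2 * (A ^ 2 - B ^ 2) := by linarith
  have k2 : sinh (2 * a) * sin (2 * b) = 4 * (A * B) := by linarith
  have k3 : cosh (2 * (a * (1 - x))) * cos (2 * (b * (1 - x))) - 1 = 2 * (X ^ 2 - Y ^ 2) := by
    linarith
  have k4 : sinh (2 * (a * (1 - x))) * sin (2 * (b * (1 - x))) = 4 * (X * Y) := by linarith
  rw [k1, k2, k3, k4]
  generalize cosh (2 * a) - cos (2 * b) = D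
  ring

section Integrals

variable (a b : ℝ)

lemma hasDerivAt_two_mul_one_sub (c x : ℝ) :
    HasDerivAt (fun x : ℝ => 2 * (c * (1 - x))) (-(2 * c)) x := by
  have h := (((hasDerivAt_id x).const_sub 1).const_mul c).const_mul 2
  exact h.congr_deriv (by ring)

/-- Real part of `∫₀¹ cosh (2 z (1 - x)) dx = sinh (2 z) / (2 z)`. -/
lemma integral_cosh_cos (hN : a ^ 2 + b ^ 2 ≠ 0) :
    ∫ x in (0:ℝ)..1, cosh (2 * (a * (1 - x))) * cos (2 * (b * (1 - x))) =
      (a * (sinh (2 * a) * cos (2 * b)) + b * (cosh (2 * a) * sin (2 * b))) /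
        (2 * (a ^ 2 + b ^ 2)) := by
  rw [integral_eq_sub_of_hasDerivAt (f := fun x =>
    -(a * (sinh (2 * (a * (1 - x))) * cos (2 * (b * (1 - x)))) +
      b * (cosh (2 * (a * (1 - x))) * sin (2 * (b * (1 - x))))) / (2 * (a ^ 2 + b ^ 2)))]
  · simp
    ring
  · intro x _
    have hu := hasDerivAt_two_mul_one_sub a x
    have hv := hasDerivAt_two_mul_one_sub b x
    have h := ((((hu.sinh.mul hv.cos).const_mul a).add
      ((hu.cosh.mul hv.sin).const_mul b)).neg).div_const (2 * (a ^ 2 + b ^ 2))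
    refine h.congr_deriv ?_
    field_simp
    ring
  · exact Continuous.intervalIntegrable (by fun_prop) _ _

/-- Imaginary part of `∫₀¹ cosh (2 z (1 - x)) dx = sinh (2 z) / (2 z)`. -/
lemma integral_sinh_sin (hN : a ^ 2 + b ^ 2 ≠ 0) :
    ∫ x in (0:ℝ)..1, sinh (2 * (a * (1 - x))) * sin (2 * (b * (1 - x))) =
      (a * (cosh (2 * a) * sin (2 * b)) - b * (sinh (2 * a) * cos (2 * b))) /
        (2 * (a ^ 2 + b ^ 2)) := by
  rw [integral_eq_sub_of_hasDerivAt (f := fun x =>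
    -(a * (cosh (2 * (a * (1 - x))) * sin (2 * (b * (1 - x)))) -
      b * (sinh (2 * (a * (1 - x))) * cos (2 * (b * (1 - x))))) / (2 * (a ^ 2 + b ^ 2)))]
  · simp
    ring
  · intro x _
    have hu := hasDerivAt_two_mul_one_sub a x
    have hv := hasDerivAt_two_mul_one_sub b x
    have h := ((((hu.cosh.mul hv.sin).const_mul a).sub
      ((hu.sinh.mul hv.cos).const_mul b)).neg).div_const (2 * (a ^ 2 + b ^ 2))
    refine h.congr_deriv ?_
    field_simp
    ring
  · exact Continuous.intervalIntegrable (by fun_prop) _ _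

end Integrals

/-- `∫₀¹ h·g = sinh(2a)sin(2b)/(2(cosh(2a) − cos(2b))²)
 − (a sin(2b) + b sinh(2a))/(4(a²+b²)(cosh(2a) − cos(2b)))`. -/
theorem profile_product_integral (a b : ℝ) (ha : 0 < a) (hb : 0 < b) :
    (∫ x in (0:ℝ)..1, (hProf a b x) * (gProf a b x)) =
      Real.sinh (2 * a) * Real.sin (2 * b) /
        (2 * (Real.cosh (2 * a) - Real.cos (2 * b)) ^ 2) -
      (a * Real.sin (2 * b) + b * Real.sinh (2 * a)) /
        (4 * (a ^ 2 + b ^ 2) * (Real.cosh (2 * a) - Real.cos (2 * b))) := by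
  have hN : a ^ 2 + b ^ 2 ≠ 0 := by positivity
  have hD : cosh (2 * a) - cos (2 * b) ≠ 0 := by
    have h1 : 1 < cosh (2 * a) := Real.one_lt_cosh.2 (by positivity)
    have h2 := Real.cos_le_one (2 * b)
    linarith
  simp_rw [hProf_mul_gProf]
  rw [intervalIntegral.integral_sub (Continuous.intervalIntegrable (by fun_prop) _ _)
      (Continuous.intervalIntegrable (by fun_prop) _ _),
    intervalIntegral.integral_const_mul, intervalIntegral.integral_const_mul,
    intervalIntegral.integral_sub (Continuous.intervalIntegrable (by fun_prop) _ _)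
      (Continuous.intervalIntegrable (by fun_prop) _ _),
    integral_cosh_cos a b hN, integral_sinh_sin a b hN, intervalIntegral.integral_const]
  have hC := Real.cosh_sq (2 * a)
  have hc := Real.sin_sq_add_cos_sq (2 * b)
  generalize cosh (2 * a) = C at *
  generalize sinh (2 * a) = S at *
  generalize cos (2 * b) = c at *
  generalize sin (2 * b) = s at *
  -- `(C c - 1 - i S s) (S c + i C s) = (C - c) (S - i s)`, the real form of
  -- `conj (sinh z)² * sinh (2 z) = |sinh z|² * (2 * conj (sinh z) * cosh z)`.
  have hRe : (C * c - 1) * (S * c) + S * s * (C * s) = (C - c) * S := by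
    linear_combination C * S * hc
  have hIm : (C * c - 1) * (C * s) - S * s * (S * c) = -((C - c) * s) := by
    linear_combination s * c * hC
  generalize C - c = D at *
  simp only [sub_zero, smul_eq_mul, mul_one]
  field_simp
  linear_combination 4 * (a * hIm - b * hRe)
end
end

section
/- Define, for real a, b > 0, p(a,b) := (b·sinh(2a) − a·sin(2b))/(4ab(cosh(2a) − cos(2b))) and M(a,b) := (4(a²+b²) − 4(b·sin(2b)·cosh(2a) + a·sinh(2a)·cos(2b)) + sinh²(2a) + sin²(2b)) / (16(a²+b²)(cosh(2a) − cos(2b))²). Then p(a,b) → 1/6 and M(a,b) → 1/36 as (a,b) → (0,0) with a > 0, b > 0; consequently √(p(a,b) + √(M(a,b))) → 1/√3 as (a,b) → (0,0) with a > 0, b > 0. -/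
/-!
Put `x = 2a`, `y = 2b`, `w = x + iy`, `R = x² + y² = ‖w‖²`. Then

* `p = (1/2) · (sinh x / x - sin y / y) / (cosh x - cos y)`;
* the numerator of `M` is `‖sinh w - w‖²`, so
  `M = (‖sinh w - w‖ / ‖w‖³)² / (4 · ((cosh x - cos y) / R)²)`.

Third-order Taylor bounds for `sinh`, `cosh`, `sin`, `cos` give
`(sinh x / x - sin y / y) / R → 1/6`, `(cosh x - cos y) / R → 1/2` and
`‖sinh w - w‖ / ‖w‖³ → 1/6`, whence `p → 1/6` and `M → 1/36`; the last limit follows by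
continuity of the square root.
-/

open Real Filter Topology

noncomputable section

/-- `p(a,b) := (b·sinh(2a) − a·sin(2b))/(4ab(cosh(2a) − cos(2b)))`. -/
def pQ (a b : ℝ) : ℝ :=
  (b * Real.sinh (2 * a) - a * Real.sin (2 * b)) /
    (4 * a * b * (Real.cosh (2 * a) - Real.cos (2 * b)))

/-- `M(a,b) := (4(a²+b²) − 4(b sin(2b)cosh(2a) + a sinh(2a)cos(2b)) + sinh²(2a) + sin²(2b))
 / (16(a²+b²)(cosh(2a) − cos(2b))²)`. -/
def MQ (a b : ℝ) : ℝ :=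
  (4 * (a ^ 2 + b ^ 2) -
      4 * (b * Real.sin (2 * b) * Real.cosh (2 * a) +
        a * Real.sinh (2 * a) * Real.cos (2 * b)) +
      Real.sinh (2 * a) ^ 2 + Real.sin (2 * b) ^ 2) /
    (16 * (a ^ 2 + b ^ 2) * (Real.cosh (2 * a) - Real.cos (2 * b)) ^ 2)

lemma complex_sinh_bound {w : ℂ} (hw : ‖w‖ ≤ 1) :
    ‖Complex.sinh w - (w + w ^ 3 / 6)‖ ≤ ‖w‖ ^ 4 * (5 / 96) := by
  have h1 := Complex.exp_bound hw (n := 4) (by norm_num)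
  have h2 := Complex.exp_bound (x := -w) (by simpa using hw) (n := 4) (by norm_num)
  rw [norm_neg] at h2
  simp only [Finset.sum_range_succ, Finset.sum_range_zero, Nat.factorial] at h1 h2
  norm_num at h1 h2
  have key : Complex.sinh w - (w + w ^ 3 / 6) =
      ((Complex.exp w - (1 + w + w ^ 2 / 2 + w ^ 3 / 6)) -
        (Complex.exp (-w) - (1 + -w + w ^ 2 / 2 + (-w) ^ 3 / 6))) / 2 := by
    rw [Complex.sinh]; ring
  rw [key, norm_div]
  have h3 := norm_sub_le (Complex.exp w - (1 + w + w ^ 2 / 2 + w ^ 3 / 6))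
        (Complex.exp (-w) - (1 + -w + w ^ 2 / 2 + (-w) ^ 3 / 6))
  norm_num
  linarith

lemma real_sinh_bound {x : ℝ} (hx : |x| ≤ 1) :
    |Real.sinh x - (x + x ^ 3 / 6)| ≤ |x| ^ 4 * (5 / 96) := by
  have h := complex_sinh_bound (w := (x : ℂ)) (by simpa using hx)
  rw [← Complex.ofReal_sinh] at h
  exact_mod_cast h

lemma real_cosh_bound {x : ℝ} (hx : |x| ≤ 1) :
    |Real.cosh x - (1 + x ^ 2 / 2)| ≤ |x| ^ 4 * (5 / 96) := by
  have h1 := Real.exp_bound hx (n := 4) (by norm_num)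
  have h2 := Real.exp_bound (x := -x) (by simpa using hx) (n := 4) (by norm_num)
  rw [abs_neg] at h2
  simp only [Finset.sum_range_succ, Finset.sum_range_zero, Nat.factorial] at h1 h2
  norm_num at h1 h2
  rw [Real.cosh_eq]
  rw [abs_le] at h1 h2 ⊢
  have e : (-x) ^ 3 = - x ^ 3 := by ring
  rw [e] at h2
  constructor <;> linarith [h1.1, h1.2, h2.1, h2.2]

/-- The filter of `(a, b) → (0, 0)` with `a, b > 0`. -/
def quadrantFilter : Filter (ℝ × ℝ) :=
  nhdsWithin (0, 0) {q : ℝ × ℝ | 0 < q.1 ∧ 0 < q.2}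

lemma eventually_small :
    ∀ᶠ q in quadrantFilter, (0 < q.1 ∧ 0 < q.2) ∧ q.1 < 1 / 4 ∧ q.2 < 1 / 4 := by
  refine (eventually_mem_nhdsWithin).and (Filter.Eventually.filter_mono nhdsWithin_le_nhds ?_)
  refine Filter.Eventually.and ?_ ?_
  · exact (continuous_fst.tendsto ((0, 0) : ℝ × ℝ)).eventually_lt_const (by norm_num)
  · exact (continuous_snd.tendsto ((0, 0) : ℝ × ℝ)).eventually_lt_const (by norm_num)

lemma tendsto_of_error_bound {f : ℝ × ℝ → ℝ} {L : ℝ}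
    (h : ∀ a b : ℝ, 0 < a → 0 < b → a < 1 / 4 → b < 1 / 4 →
      |f (a, b) - L| ≤ 2 * a + 2 * b) :
    Tendsto f quadrantFilter (𝓝 L) := by
  rw [tendsto_iff_norm_sub_tendsto_zero]
  have h0 : Tendsto (fun q : ℝ × ℝ => 2 * q.1 + 2 * q.2) quadrantFilter (𝓝 0) := by
    have hc : Continuous (fun q : ℝ × ℝ => 2 * q.1 + 2 * q.2) := by fun_prop
    have := (hc.tendsto (0, 0)).mono_left
      (nhdsWithin_le_nhds (s := {q : ℝ × ℝ | 0 < q.1 ∧ 0 < q.2}))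
    simpa [quadrantFilter] using this
  refine squeeze_zero' (Eventually.of_forall fun _ => norm_nonneg _) ?_ h0
  filter_upwards [eventually_small] with q hq
  exact h q.1 q.2 hq.1.1 hq.1.2 hq.2.1 hq.2.2

lemma tendsto_sinh_sin_quotient :
    Tendsto (fun q : ℝ × ℝ =>
      (Real.sinh (2 * q.1) / (2 * q.1) - Real.sin (2 * q.2) / (2 * q.2)) /
        ((2 * q.1) ^ 2 + (2 * q.2) ^ 2)) quadrantFilter (𝓝 (1 / 6)) := by
  refine tendsto_of_error_bound fun a b ha hb ha' hb' => ?_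
  obtain ⟨x, hx⟩ : ∃ x, x = 2 * a := ⟨_, rfl⟩
  obtain ⟨y, hy⟩ : ∃ y, y = 2 * b := ⟨_, rfl⟩
  simp only [← hx, ← hy]
  have hx0 : 0 < x := by linarith
  have hy0 : 0 < y := by linarith
  have h1 := real_sinh_bound (x := x) (by rw [abs_of_pos hx0]; linarith)
  have h2 := Real.sin_bound (x := y) (by rw [abs_of_pos hy0]; linarith)
  rw [abs_of_pos hx0] at h1
  rw [abs_of_pos hy0] at h2
  have e1 : |Real.sinh x / x - (1 + x ^ 2 / 6)| ≤ x ^ 3 := by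
    have : Real.sinh x / x - (1 + x ^ 2 / 6) = (Real.sinh x - (x + x ^ 3 / 6)) / x := by
      field_simp
    rw [this, abs_div, abs_of_pos hx0, div_le_iff₀ hx0]
    nlinarith [pow_pos hx0 4]
  have e2 : |Real.sin y / y - (1 - y ^ 2 / 6)| ≤ y ^ 3 := by
    have : Real.sin y / y - (1 - y ^ 2 / 6) = (Real.sin y - (y - y ^ 3 / 6)) / y := by
      field_simp
    rw [this, abs_div, abs_of_pos hy0, div_le_iff₀ hy0]
    nlinarith [pow_pos hy0 4]
  have hR : 0 < x ^ 2 + y ^ 2 := by positivity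
  have key : (Real.sinh x / x - Real.sin y / y) / (x ^ 2 + y ^ 2) - 1 / 6 =
      ((Real.sinh x / x - (1 + x ^ 2 / 6)) - (Real.sin y / y - (1 - y ^ 2 / 6))) /
        (x ^ 2 + y ^ 2) := by
    rw [div_sub' hR.ne']; congr 1; ring
  rw [key, abs_div, abs_of_pos hR, div_le_iff₀ hR]
  refine (abs_sub _ _).trans ?_
  have : 0 < x * y ^ 2 := by positivity
  have : 0 < y * x ^ 2 := by positivity
  nlinarith

lemma tendsto_cosh_cos_quotient :
    Tendsto (fun q : ℝ × ℝ =>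
      (Real.cosh (2 * q.1) - Real.cos (2 * q.2)) /
        ((2 * q.1) ^ 2 + (2 * q.2) ^ 2)) quadrantFilter (𝓝 (1 / 2)) := by
  refine tendsto_of_error_bound fun a b ha hb ha' hb' => ?_
  obtain ⟨x, hx⟩ : ∃ x, x = 2 * a := ⟨_, rfl⟩
  obtain ⟨y, hy⟩ : ∃ y, y = 2 * b := ⟨_, rfl⟩
  simp only [← hx, ← hy]
  have hx0 : 0 < x := by linarith
  have hy0 : 0 < y := by linarith
  have hx1 : x ≤ 1 := by linarith
  have hy1 : y ≤ 1 := by linarith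
  have h1 := real_cosh_bound (x := x) (by rwa [abs_of_pos hx0])
  have h2 := Real.cos_bound (x := y) (by rwa [abs_of_pos hy0])
  rw [abs_of_pos hx0] at h1
  rw [abs_of_pos hy0] at h2
  have hR : 0 < x ^ 2 + y ^ 2 := by positivity
  have key : (Real.cosh x - Real.cos y) / (x ^ 2 + y ^ 2) - 1 / 2 =
      ((Real.cosh x - (1 + x ^ 2 / 2)) - (Real.cos y - (1 - y ^ 2 / 2))) /
        (x ^ 2 + y ^ 2) := by
    rw [div_sub' hR.ne']; congr 1; ring
  rw [key, abs_div, abs_of_pos hR, div_le_iff₀ hR]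
  refine (abs_sub _ _).trans ?_
  have : 0 < x * y ^ 2 := by positivity
  have : 0 < y * x ^ 2 := by positivity
  have : x ^ 4 ≤ x ^ 3 := pow_le_pow_of_le_one hx0.le hx1 (by norm_num)
  have : y ^ 4 ≤ y ^ 3 := pow_le_pow_of_le_one hy0.le hy1 (by norm_num)
  have : 0 < x ^ 3 := by positivity
  have : 0 < y ^ 3 := by positivity
  nlinarith

lemma tendsto_norm_sinh_sub_quotient :
    Tendsto (fun q : ℝ × ℝ =>
      ‖Complex.sinh (⟨2 * q.1, 2 * q.2⟩ : ℂ) - ⟨2 * q.1, 2 * q.2⟩‖ /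
        ‖(⟨2 * q.1, 2 * q.2⟩ : ℂ)‖ ^ 3) quadrantFilter (𝓝 (1 / 6)) := by
  refine tendsto_of_error_bound fun a b ha hb ha' hb' => ?_
  obtain ⟨w, hw⟩ : ∃ w : ℂ, w = ⟨2 * a, 2 * b⟩ := ⟨_, rfl⟩
  simp only [← hw]
  have hle : ‖w‖ ≤ 2 * a + 2 * b := by
    have := Complex.norm_le_abs_re_add_abs_im w
    rw [hw] at this ⊢
    simpa [abs_of_pos ha, abs_of_pos hb] using this
  have hw0 : 0 < ‖w‖ := by
    rw [norm_pos_iff]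
    intro h
    have := congrArg Complex.re (hw.symm.trans h)
    simp at this
    linarith
  have h1 := complex_sinh_bound (w := w) (by linarith)
  have h2 := abs_norm_sub_norm_le (Complex.sinh w - w) (w ^ 3 / 6)
  have h3 : Complex.sinh w - w - w ^ 3 / 6 = Complex.sinh w - (w + w ^ 3 / 6) := by ring
  rw [h3] at h2
  have h4 : ‖w ^ 3 / 6‖ = ‖w‖ ^ 3 / 6 := by simp
  rw [h4] at h2
  have hp : 0 < ‖w‖ ^ 3 := by positivity
  have key : ‖Complex.sinh w - w‖ / ‖w‖ ^ 3 - 1 / 6 =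
      (‖Complex.sinh w - w‖ - ‖w‖ ^ 3 / 6) / ‖w‖ ^ 3 := by
    field_simp
  rw [key, abs_div, abs_of_pos hp, div_le_iff₀ hp]
  have : ‖w‖ * ‖w‖ ^ 3 ≤ (2 * a + 2 * b) * ‖w‖ ^ 3 := by gcongr
  nlinarith [pow_pos hw0 4]

/-- With `x = 2a`, `y = 2b`, the right-hand side is the numerator of `M(a,b)`. -/
lemma normSq_sinh_sub (x y : ℝ) :
    ‖Complex.sinh (⟨x, y⟩ : ℂ) - ⟨x, y⟩‖ ^ 2 =
      (x ^ 2 + y ^ 2) - 2 * (y * Real.sin y * Real.cosh x + x * Real.sinh x * Real.cos y) +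
        Real.sinh x ^ 2 + Real.sin y ^ 2 := by
  have hs : Complex.sinh (⟨x, y⟩ : ℂ) =
      ⟨Real.sinh x * Real.cos y, Real.cosh x * Real.sin y⟩ := by
    have : (⟨x, y⟩ : ℂ) = x + y * Complex.I := Complex.mk_eq_add_mul_I x y
    rw [this, Complex.sinh_add, Complex.sinh_mul_I, Complex.cosh_mul_I,
      Complex.mk_eq_add_mul_I]
    push_cast
    ring
  rw [hs, ← Complex.normSq_eq_norm_sq, Complex.normSq_apply]
  simp only [Complex.sub_re, Complex.sub_im]
  have h1 := Real.cosh_sq x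
  have h2 := Real.sin_sq_add_cos_sq y
  have h3 : Real.cos y ^ 2 = 1 - Real.sin y ^ 2 := by linarith
  linear_combination Real.sin y ^ 2 * h1 + Real.sinh x ^ 2 * h3

lemma tendsto_pQ :
    Tendsto (fun q : ℝ × ℝ => pQ q.1 q.2) quadrantFilter (𝓝 (1 / 6)) := by
  have h := (tendsto_sinh_sin_quotient.div tendsto_cosh_cos_quotient (by norm_num)).const_mul
    (1 / 2 : ℝ)
  have e : (1 / 2 : ℝ) * (1 / 6 / (1 / 2)) = 1 / 6 := by norm_num
  rw [e] at h
  refine h.congr' ?_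
  filter_upwards [eventually_small] with q hq
  obtain ⟨⟨ha, hb⟩, -⟩ := hq
  have hR : (2 * q.1) ^ 2 + (2 * q.2) ^ 2 ≠ 0 := by positivity
  have hD : Real.cosh (2 * q.1) - Real.cos (2 * q.2) ≠ 0 := by
    have h1 := Real.one_lt_cosh.2 (show 2 * q.1 ≠ 0 by positivity)
    linarith [Real.cos_le_one (2 * q.2)]
  simp only [Pi.div_apply]
  rw [div_div_div_cancel_right₀ hR, pQ]
  field_simp
  ring

lemma tendsto_MQ :
    Tendsto (fun q : ℝ × ℝ => MQ q.1 q.2) quadrantFilter (𝓝 (1 / 36)) := by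
  have h := (tendsto_norm_sinh_sub_quotient.pow 2).div
    ((tendsto_cosh_cos_quotient.pow 2).const_mul 4) (by norm_num)
  have e : (1 / 6 : ℝ) ^ 2 / (4 * (1 / 2) ^ 2) = 1 / 36 := by norm_num
  rw [e] at h
  refine h.congr' ?_
  filter_upwards [eventually_small] with q hq
  obtain ⟨⟨ha, hb⟩, -⟩ := hq
  have hR : (2 * q.1) ^ 2 + (2 * q.2) ^ 2 ≠ 0 := by positivity
  have hn : (‖(⟨2 * q.1, 2 * q.2⟩ : ℂ)‖ ^ 3) ^ 2 = ((2 * q.1) ^ 2 + (2 * q.2) ^ 2) ^ 3 := by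
    rw [pow_right_comm, ← Complex.normSq_eq_norm_sq, Complex.normSq_apply]
    ring
  simp only [Pi.div_apply]
  rw [div_pow, div_pow, hn, normSq_sinh_sub, MQ]
  have hD : Real.cosh (2 * q.1) - Real.cos (2 * q.2) ≠ 0 := by
    have h1 := Real.one_lt_cosh.2 (show 2 * q.1 ≠ 0 by positivity)
    linarith [Real.cos_le_one (2 * q.2)]
  have hr : q.1 ^ 2 + q.2 ^ 2 ≠ 0 := by positivity
  have e4 : (2 * q.1) ^ 2 + (2 * q.2) ^ 2 = 4 * (q.1 ^ 2 + q.2 ^ 2) := by ring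
  rw [e4]
  field_simp
  ring

/-- `p(a,b) → 1/6`, `M(a,b) → 1/36` and `√(p(a,b) + √(M(a,b))) → 1/√3`
as `(a,b) → (0,0)` with `a > 0`, `b > 0`. -/
theorem limit_of_Q_at_zero :
    Tendsto (fun q : ℝ × ℝ => pQ q.1 q.2)
      (nhdsWithin (0, 0) {q : ℝ × ℝ | 0 < q.1 ∧ 0 < q.2}) (nhds (1 / 6)) ∧
    Tendsto (fun q : ℝ × ℝ => MQ q.1 q.2)
      (nhdsWithin (0, 0) {q : ℝ × ℝ | 0 < q.1 ∧ 0 < q.2}) (nhds (1 / 36)) ∧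
    Tendsto (fun q : ℝ × ℝ => Real.sqrt (pQ q.1 q.2 + Real.sqrt (MQ q.1 q.2)))
      (nhdsWithin (0, 0) {q : ℝ × ℝ | 0 < q.1 ∧ 0 < q.2})
      (nhds (1 / Real.sqrt 3)) := by
  refine ⟨tendsto_pQ, tendsto_MQ, ?_⟩
  have h := (tendsto_pQ.add tendsto_MQ.sqrt).sqrt
  have e : √(1 / 6 + √(1 / 36 : ℝ)) = 1 / √3 := by
    have : √(1 / 36 : ℝ) = 1 / 6 := by
      rw [show (1 / 36 : ℝ) = (1 / 6) ^ 2 by norm_num]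
      exact Real.sqrt_sq (by norm_num)
    rw [this, show (1 / 6 + 1 / 6 : ℝ) = 1 / 3 by norm_num, Real.sqrt_div zero_le_one,
      Real.sqrt_one]
  rw [e] at h
  exact h
end
end

section
/- Let σ > 0 and μ ≥ 0 be real constants and let n be a positive integer with μ + n²π²σ > 2nπ. Set k := (μ + n²π²σ)/2 and r := √((μ + n²π²σ)² − 4n²π²)/2. Then n²π²/(μ + n²π²σ) ≤ k − r ≤ 2n²π²/(μ + n²π²σ). -/
open Real

/-- in the overdamped case `μ + n²π²σ > 2nπ`, with `k = (μ + n²π²σ)/2`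
and `r = √((μ + n²π²σ)² − 4n²π²)/2`, one has
`n²π²/(μ + n²π²σ) ≤ k − r ≤ 2n²π²/(μ + n²π²σ)`. -/
theorem overdamped_root_bounds
    (σ μ : ℝ) (hσ : 0 < σ) (hμ : 0 ≤ μ)
    (n : ℕ) (hn : 1 ≤ n)
    (hover : 2 * (n:ℝ) * π < μ + (n:ℝ) ^ 2 * π ^ 2 * σ)
    (k r : ℝ)
    (hk : k = (μ + (n:ℝ) ^ 2 * π ^ 2 * σ) / 2)
    (hr : r = Real.sqrt ((μ + (n:ℝ) ^ 2 * π ^ 2 * σ) ^ 2 - 4 * (n:ℝ) ^ 2 * π ^ 2) / 2) :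
    (n:ℝ) ^ 2 * π ^ 2 / (μ + (n:ℝ) ^ 2 * π ^ 2 * σ) ≤ k - r ∧
    k - r ≤ 2 * (n:ℝ) ^ 2 * π ^ 2 / (μ + (n:ℝ) ^ 2 * π ^ 2 * σ) := by
  have hb : 0 < (n:ℝ) * π := mul_pos (by exact_mod_cast hn) pi_pos
  set A := μ + (n:ℝ) ^ 2 * π ^ 2 * σ with hA
  set s := Real.sqrt (A ^ 2 - 4 * (n:ℝ) ^ 2 * π ^ 2) with hs
  have hApos : 0 < A := by linarith
  have hs0 : 0 ≤ s := Real.sqrt_nonneg _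
  -- Vieta: `(k - r) * (k + r) = n²π²`, in the form `s² = A² - 4n²π²` with `A = 2k`, `s = 2r`.
  have hsq : s ^ 2 = A ^ 2 - 4 * (n:ℝ) ^ 2 * π ^ 2 := Real.sq_sqrt (by nlinarith)
  have hsA : s ≤ A := abs_le_of_sq_le_sq' (by nlinarith) hApos.le |>.2
  -- Both bounds are `k ≤ k + r ≤ 2k = A`, multiplied by `k - r ≥ 0`.
  rw [hk, hr, div_le_iff₀ hApos, le_div_iff₀ hApos]
  constructor
  · nlinarith [sq_nonneg (A - s)]
  · nlinarith [mul_nonneg hs0 (sub_nonneg.2 hsA)]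
end
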